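/- arXiv:2506.18447 — 2 statements merged into one kernel-verified Lean document; each statement's English description precedes it below -/
import Mathlib

section
/- Let Φ = {f_1,…,f_N} be an iterated function system of contracting similarities on ℝ^d with ratios λ_1,…,λ_N satisfying the open set condition, let p be a probability vector with all p_i > 0, let α satisfy −Σ_{i=1}^N λ_i^{s₀} log p_i < α < −log p_min, and let ℓ : ℕ → ℕ be monotone increasing with liminf_{n→∞} ℓ(n)/log n = 1/α. Then for ℙ_p-almost every ō ∈ Σ: dim_H(Λ ∖ R(ō,ℓ)) = inf_{q<0} P_α(q) < s₀, and H^{s₀}(R(ō,ℓ)) = H^{s₀}(Λ). -/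
/-!
Write `a_i = log p_i + α` and `G(s, q) = ∑ λ_i^s e^{q a_i}`, so that `G(P q, q) = 1`, and let
`S = inf_{q<0} P q`. The inequality `S < s₀` holds because `G(s₀, ·)` equals `1` at `q = 0` and has
derivative `∑ λ_i^{s₀} a_i > 0` there; `S ≥ 0` because the smallest `a_i` is negative.

*Upper bound.* Let `0 < β < α`. For infinitely many `n` the length `ℓ n` is less than `c log n` with
`c β < 1`, and then the roughly `n / ℓ n` disjoint windows of `o` up to time `n` contain, with
probability tending to `1`, every word of length `ℓ n` of probability at least `e^{-β ℓ n}`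
(`Bern.ae_hits`). As `ℓ` is monotone, an uncovered sequence `x` therefore has infinitely many
prefixes with `p_{x|m} e^{β m} < 1` (`frequently_light`). Covering by the pieces of such prefixes
gives `μH[s] = 0` whenever `∑ λ_i^s (p_i e^β)^q < 1` for some `q ≤ 0` (`OSC.hausdorff_zero`), and
for `s > S` such `q < 0` and `β < α` exist by continuity.

*Lower bound.* For `0 < t < S`, `G(t, q) > 1` for all `q ≤ 0`. The Gibbs weights
`λ_i^t e^{q a_i} / G(t, q)` at the minimizer `q ≤ 0` have nonpositive `a`-average and entropy larger
than `t` times the Lyapunov exponent; a small perturbation makes the `a`-average negative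
(`exists_weights`). Let `ν` be the Bernoulli measure with these weights. By the strong law of large
numbers, `ν`-almost every `x` has `p_{x|m} ≤ e^{-β m}` eventually for some `β > α`, so `x` is almost
surely uncovered by Borel–Cantelli (`Bern.ae_notMem`), and Fubini exchanges the quantifiers. The
mass distribution principle (`OSC.le_dimH`), which rests on the bounded overlap of pieces of equal
size under the open set condition, yields dimension at least `t` for the image of such `x`.

That image must avoid `π '' limsupCylinders ℓ o`, and `π` need not be injective. Choosing a word `a`
whose piece has the largest number of neighbouring pieces of comparable size shows that a point
with a coding in which `a` occurs infinitely often has no other coding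
(`OSC.exists_unique_coding`), and `ν`-almost every sequence contains `a` infinitely often.

The statement on `μH[s₀]` follows from `dimH (Λ \ R) = S < s₀`.
-/

open MeasureTheory Filter Topology Set ENNReal

noncomputable section

/-- The cylinder set in `{1,…,N}^ℕ` determined by a finite word `w` of length `m`. -/
def cylinder {N m : ℕ} (w : Fin m → Fin N) : Set (ℕ → Fin N) :=
  {x | ∀ j : Fin m, x (j : ℕ) = w j}

/-- The product `r_{w 0} ⋯ r_{w (m-1)}` of weights along a finite word `w`. -/
def wordProd {N : ℕ} (r : Fin N → ℝ) {m : ℕ} (w : Fin m → Fin N) : ℝ :=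
  ∏ j, r (w j)

/-- The composition `f_{x 0} ∘ f_{x 1} ∘ ⋯ ∘ f_{x (n-1)}` of the maps along
the first `n` symbols of `x`; the coding map is `π x = lim_n prefixMap f x n 0`. -/
def prefixMap {N : ℕ} {E : Type*} (f : Fin N → E → E) (x : ℕ → Fin N) : ℕ → E → E
  | 0 => id
  | n + 1 => fun y => f (x 0) (prefixMap f (fun k => x (k + 1)) n y)

/-- The symbolic limsup set `⋂ₖ ⋃_{n ≥ k} [(σⁿ ō)|_{ℓ(n)}]`; its image under the
coding map `π` is the dynamical covering set `R(ō, ℓ)`. -/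
def limsupCylinders {N : ℕ} (ℓ : ℕ → ℕ) (o : ℕ → Fin N) : Set (ℕ → Fin N) :=
  ⋂ k, ⋃ n, ⋃ _ : k ≤ n, cylinder (fun j : Fin (ℓ n) => o (n + (j : ℕ)))

/-- `m(n) = ⌊#{k ∈ ℕ : ℓ(k) = n}/n⌋`. -/
def countM (ℓ : ℕ → ℕ) (n : ℕ) : ℕ := Nat.card {k : ℕ | ℓ k = n} / n

/-- The probabilistic pressure
`L(s) = limsup_n (1/n) log Σ_{|ȷ|=n} λ_ȷ^s (1 − (1 − p_ȷ)^{m(n)})`. -/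
def pressL {N : ℕ} (lam p : Fin N → ℝ) (m : ℕ → ℕ) (s : ℝ) : ℝ :=
  Filter.limsup (fun n : ℕ => Real.log (∑ w : Fin n → Fin N,
    wordProd lam w ^ s * (1 - (1 - wordProd p w) ^ m n)) / (n : ℝ)) atTop

namespace CoverSet

/-! ### Words, cylinder maps and the coding map -/

/-- The product of the weights `r` along a finite word, written as a list. -/
def lp {N : ℕ} (r : Fin N → ℝ) (w : List (Fin N)) : ℝ := (w.map r).prod

/-- The composition of the maps `f` along a finite word, written as a list. -/
def fw {N : ℕ} {E : Type*} (f : Fin N → E → E) : List (Fin N) → E → E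
  | [] => id
  | i :: w => fun y => f i (fw f w y)

/-- The prefix of length `n` of an infinite sequence. -/
def pre {N : ℕ} (x : ℕ → Fin N) (n : ℕ) : List (Fin N) := List.ofFn (fun j : Fin n => x j)

/-- The `n`-th iterate of the left shift. -/
def shift {N : ℕ} (n : ℕ) (x : ℕ → Fin N) : ℕ → Fin N := fun k => x (n + k)

/-- A self-similar system with the open set condition, together with its attractor `Λ`,
the open set `U` and the coding map `π`. -/
structure OSC {N d : ℕ} (lam : Fin N → ℝ)
    (f : Fin N → EuclideanSpace ℝ (Fin d) → EuclideanSpace ℝ (Fin d))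
    (Λ U : Set (EuclideanSpace ℝ (Fin d)))
    (π : (ℕ → Fin N) → EuclideanSpace ℝ (Fin d)) : Prop where
  lam_mem : ∀ i, lam i ∈ Set.Ioo (0 : ℝ) 1
  sim : ∀ i x y, dist (f i x) (f i y) = lam i * dist x y
  ne : Λ.Nonempty
  cpt : IsCompact Λ
  inv : Λ = ⋃ i, f i '' Λ
  Une : U.Nonempty
  Uo : IsOpen U
  Ub : Bornology.IsBounded U
  Usub : ∀ i, f i '' U ⊆ U
  Udisj : Pairwise fun i j => Disjoint (f i '' U) (f j '' U)
  lim : ∀ x, Filter.Tendsto (fun n => prefixMap f x n 0) Filter.atTop (nhds (π x))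

section words

variable {N : ℕ}

@[simp] lemma lp_nil (r : Fin N → ℝ) : lp r [] = 1 := rfl

@[simp] lemma lp_cons (r : Fin N → ℝ) (i : Fin N) (w : List (Fin N)) :
    lp r (i :: w) = r i * lp r w := by simp [lp]

@[simp] lemma lp_append (r : Fin N → ℝ) (v w : List (Fin N)) :
    lp r (v ++ w) = lp r v * lp r w := by simp [lp]

lemma lp_ofFn (r : Fin N → ℝ) {m : ℕ} (w : Fin m → Fin N) :
    lp r (List.ofFn w) = wordProd r w := by
  simp [lp, wordProd, List.map_ofFn, List.prod_ofFn]

lemma lp_pre (r : Fin N → ℝ) (x : ℕ → Fin N) (n : ℕ) :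
    lp r (pre x n) = ∏ j ∈ Finset.range n, r (x j) := by
  rw [pre, lp_ofFn, wordProd, Finset.prod_range]

@[simp] lemma length_pre (x : ℕ → Fin N) (n : ℕ) : (pre x n).length = n := by simp [pre]

@[simp] lemma pre_zero (x : ℕ → Fin N) : pre x 0 = [] := by simp [pre]

lemma pre_succ (x : ℕ → Fin N) (n : ℕ) :
    pre x (n + 1) = x 0 :: pre (fun k => x (k + 1)) n := by
  simp [pre, List.ofFn_succ]

lemma pre_succ_last (x : ℕ → Fin N) (n : ℕ) : pre x (n + 1) = pre x n ++ [x n] := by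
  rw [pre, List.ofFn_succ_last]; rfl

lemma pre_add (x : ℕ → Fin N) (n m : ℕ) :
    pre x (n + m) = pre x n ++ pre (shift n x) m := by
  induction m with
  | zero => simp
  | succ m ih => rw [← add_assoc, pre_succ_last, ih, pre_succ_last]; simp [shift]

lemma pre_prefix (x : ℕ → Fin N) {n m : ℕ} (h : n ≤ m) : pre x n <+: pre x m := by
  obtain ⟨k, rfl⟩ := Nat.exists_eq_add_of_le h
  rw [pre_add]; exact List.prefix_append _ _

lemma pre_eq_iff (x y : ℕ → Fin N) (n : ℕ) : pre x n = pre y n ↔ ∀ j < n, x j = y j := by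
  simp only [pre, List.ofFn_inj, funext_iff]
  exact ⟨fun h j hj => h ⟨j, hj⟩, fun h j => h j j.2⟩

lemma prefixMap_eq {E : Type*} (f : Fin N → E → E) (n : ℕ) :
    ∀ x : ℕ → Fin N, prefixMap f x n = fw f (pre x n) := by
  induction n with
  | zero => intro x; simp [prefixMap, fw]
  | succ n ih => intro x; rw [pre_succ]; simp [prefixMap, fw, ih]

lemma fw_append {E : Type*} (f : Fin N → E → E) (v w : List (Fin N)) (y : E) :
    fw f (v ++ w) y = fw f v (fw f w y) := by
  induction v with
  | nil => rfl
  | cons i v ih => simp [fw, ih]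

end words

section geometry

variable {N d : ℕ} {lam : Fin N → ℝ}
    {f : Fin N → EuclideanSpace ℝ (Fin d) → EuclideanSpace ℝ (Fin d)}
    {Λ U : Set (EuclideanSpace ℝ (Fin d))}
    {π : (ℕ → Fin N) → EuclideanSpace ℝ (Fin d)}

namespace OSC

lemma lp_pos (h : OSC lam f Λ U π) (w : List (Fin N)) : 0 < lp lam w := by
  induction w with
  | nil => simp
  | cons i w ih => simpa using mul_pos (h.lam_mem i).1 ih

lemma lp_le_one (h : OSC lam f Λ U π) (w : List (Fin N)) : lp lam w ≤ 1 := by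
  induction w with
  | nil => simp
  | cons i w ih =>
    rw [lp_cons]; exact mul_le_one₀ (h.lam_mem i).2.le (h.lp_pos w).le ih

lemma lp_lt_one (h : OSC lam f Λ U π) {w : List (Fin N)} (hw : w ≠ []) : lp lam w < 1 := by
  cases w with
  | nil => exact absurd rfl hw
  | cons i w =>
    rw [lp_cons]
    calc lam i * lp lam w ≤ lam i * 1 :=
          mul_le_mul_of_nonneg_left (h.lp_le_one w) (h.lam_mem i).1.le
      _ < 1 := by simpa using (h.lam_mem i).2

/-- All ratios lie in a compact subinterval `[c, C]` of `(0, 1)`. -/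
lemma exists_bounds (h : OSC lam f Λ U π) :
    ∃ c C : ℝ, 0 < c ∧ c < 1 ∧ 0 < C ∧ C < 1 ∧ ∀ i, c ≤ lam i ∧ lam i ≤ C := by
  rcases isEmpty_or_nonempty (Fin N) with hN | hN
  · exact ⟨1 / 2, 1 / 2, by norm_num, by norm_num, by norm_num, by norm_num,
      fun i => isEmptyElim i⟩
  · obtain ⟨i, hi⟩ := Finite.exists_min lam
    obtain ⟨j, hj⟩ := Finite.exists_max lam
    exact ⟨lam i, lam j, (h.lam_mem i).1, (h.lam_mem i).2, (h.lam_mem j).1, (h.lam_mem j).2,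
      fun k => ⟨hi k, hj k⟩⟩

lemma lp_le_pow (h : OSC lam f Λ U π) {C : ℝ} (hC : ∀ i, lam i ≤ C) (hC0 : 0 < C)
    (w : List (Fin N)) : lp lam w ≤ C ^ w.length := by
  induction w with
  | nil => simp
  | cons i w ih =>
    rw [lp_cons, List.length_cons, pow_succ, mul_comm]
    exact mul_le_mul ih (hC i) (h.lam_mem i).1.le (by positivity)

lemma pow_le_lp {c : ℝ} (hc : ∀ i, c ≤ lam i) (hc0 : 0 < c)
    (w : List (Fin N)) : c ^ w.length ≤ lp lam w := by
  induction w with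
  | nil => simp
  | cons i w ih =>
    rw [lp_cons, List.length_cons, pow_succ, mul_comm]
    exact mul_le_mul (hc i) ih (by positivity) (hc0.le.trans (hc i))

lemma dist_fw (h : OSC lam f Λ U π) (w : List (Fin N)) (x y : EuclideanSpace ℝ (Fin d)) :
    dist (fw f w x) (fw f w y) = lp lam w * dist x y := by
  induction w with
  | nil => simp [fw]
  | cons i w ih => simp only [fw, lp_cons]; rw [h.sim, ih, mul_assoc]

lemma f_continuous (h : OSC lam f Λ U π) (i : Fin N) : Continuous (f i) := by
  have : LipschitzWith ⟨lam i, (h.lam_mem i).1.le⟩ (f i) :=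
    LipschitzWith.of_dist_le_mul fun x y => (h.sim i x y).le
  exact this.continuous

lemma fw_injective (h : OSC lam f Λ U π) (w : List (Fin N)) : Function.Injective (fw f w) := by
  intro x y hxy
  have := h.dist_fw w x y
  rw [hxy, dist_self] at this
  exact dist_eq_zero.1 ((mul_eq_zero.1 this.symm).resolve_left (h.lp_pos w).ne')

/-- A similarity of Euclidean space is onto: after rescaling it is an isometry, hence affine. -/
lemma fw_surjective (h : OSC lam f Λ U π) (w : List (Fin N)) : Function.Surjective (fw f w) := by
  have hpos := h.lp_pos w
  set g : EuclideanSpace ℝ (Fin d) → EuclideanSpace ℝ (Fin d) :=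
    fun x => (lp lam w)⁻¹ • fw f w x with hg
  have hiso : Isometry g := by
    refine Isometry.of_dist_eq fun x y => ?_
    simp only [hg, dist_smul₀, Real.norm_eq_abs, abs_inv, abs_of_pos hpos, h.dist_fw]
    field_simp
  have hsurj : Function.Surjective hiso.affineIsometryOfStrictConvexSpace := by
    have hl : Function.Surjective
        hiso.affineIsometryOfStrictConvexSpace.linearIsometry.toLinearMap :=
      LinearMap.injective_iff_surjective.1
        hiso.affineIsometryOfStrictConvexSpace.linearIsometry.injective
    exact (AffineMap.linear_surjective_iff
      hiso.affineIsometryOfStrictConvexSpace.toAffineMap).1 hl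
  intro y
  obtain ⟨x, hx⟩ := hsurj ((lp lam w)⁻¹ • y)
  refine ⟨x, ?_⟩
  have : (lp lam w)⁻¹ • fw f w x = (lp lam w)⁻¹ • y := hx
  exact smul_right_injective _ (inv_ne_zero hpos.ne') this

lemma ball_subset_image (h : OSC lam f Λ U π) (w : List (Fin N))
    (u : EuclideanSpace ℝ (Fin d)) (ρ : ℝ) :
    Metric.ball (fw f w u) (lp lam w * ρ) ⊆ fw f w '' Metric.ball u ρ := by
  intro y hy
  obtain ⟨x, rfl⟩ := h.fw_surjective w y
  rw [Metric.mem_ball, h.dist_fw] at hy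
  exact ⟨x, lt_of_mul_lt_mul_left hy (h.lp_pos w).le, rfl⟩

lemma fw_Λ (h : OSC lam f Λ U π) (w : List (Fin N)) {z : EuclideanSpace ℝ (Fin d)} (hz : z ∈ Λ) :
    fw f w z ∈ Λ := by
  induction w with
  | nil => exact hz
  | cons i w ih =>
    rw [h.inv]; exact mem_iUnion.2 ⟨i, fw f w z, ih, rfl⟩

lemma fw_U (h : OSC lam f Λ U π) (w : List (Fin N)) {z : EuclideanSpace ℝ (Fin d)} (hz : z ∈ U) :
    fw f w z ∈ U := by
  induction w with
  | nil => exact hz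
  | cons i w ih => exact h.Usub i ⟨_, ih, rfl⟩

lemma lp_pre_tendsto (h : OSC lam f Λ U π) (x : ℕ → Fin N) :
    Tendsto (fun n => lp lam (pre x n)) atTop (𝓝 0) := by
  obtain ⟨c, C, -, -, hC0, hC1, hb⟩ := h.exists_bounds
  refine squeeze_zero (fun n => (h.lp_pos _).le) (fun n => ?_)
    (tendsto_pow_atTop_nhds_zero_of_lt_one hC0.le hC1)
  simpa using h.lp_le_pow (fun i => (hb i).2) hC0 (pre x n)

/-- The coding map may be computed from any base points in a bounded set. -/
lemma tendsto_fw (h : OSC lam f Λ U π) (x : ℕ → Fin N) (z : ℕ → EuclideanSpace ℝ (Fin d))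
    {D : ℝ} (hz : ∀ n, dist (z n) 0 ≤ D) :
    Tendsto (fun n => fw f (pre x n) (z n)) atTop (𝓝 (π x)) := by
  have h1 := h.lim x
  simp only [prefixMap_eq] at h1
  refine tendsto_of_tendsto_of_dist h1 ?_
  refine squeeze_zero (fun _ => dist_nonneg) (fun n => ?_)
    (by simpa using (h.lp_pre_tendsto x).mul_const D)
  rw [dist_comm, h.dist_fw]
  exact mul_le_mul_of_nonneg_left (hz n) (h.lp_pos _).le

lemma exists_D (h : OSC lam f Λ U π) : ∃ D : ℝ, 0 < D ∧ ∀ z ∈ Λ, dist z 0 ≤ D := by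
  obtain ⟨D, hD⟩ := h.cpt.isBounded.subset_closedBall 0
  exact ⟨max D 1, by positivity, fun z hz => (hD hz).trans (le_max_left _ _)⟩

lemma π_mem (h : OSC lam f Λ U π) (x : ℕ → Fin N) : π x ∈ Λ := by
  obtain ⟨z, hz⟩ := h.ne
  exact h.cpt.isClosed.mem_of_tendsto (h.tendsto_fw x (fun _ => z) fun _ => le_rfl)
    (Eventually.of_forall fun n => h.fw_Λ _ hz)

lemma π_eq (h : OSC lam f Λ U π) (x : ℕ → Fin N) (n : ℕ) :
    π x = fw f (pre x n) (π (shift n x)) := by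
  induction n generalizing x with
  | zero =>
    have : shift 0 x = x := by funext k; simp [shift]
    simp [fw, this]
  | succ n ih =>
    have h1 : π x = f (x 0) (π (fun k => x (k + 1))) := by
      have h2 := (h.lim x).comp (tendsto_add_atTop_nat 1)
      have h3 := ((h.f_continuous (x 0)).tendsto _).comp (h.lim fun k => x (k + 1))
      exact tendsto_nhds_unique h2 h3
    rw [h1, ih, pre_succ]
    have : shift n (fun k => x (k + 1)) = shift (n + 1) x := by
      funext k; simp only [shift]; congr 1; ring
    rw [this]; rfl

lemma π_mem_image (h : OSC lam f Λ U π) (x : ℕ → Fin N) (n : ℕ) :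
    π x ∈ fw f (pre x n) '' Λ := ⟨_, h.π_mem _, (h.π_eq x n).symm⟩

lemma subset_range (h : OSC lam f Λ U π) : Λ ⊆ range π := by
  intro z hz
  have step : ∀ z : Λ, ∃ i : Fin N, ∃ z' : Λ, (z : EuclideanSpace ℝ (Fin d)) = f i z' := by
    rintro ⟨z, hz⟩
    rw [h.inv] at hz
    obtain ⟨i, z', hz', rfl⟩ := mem_iUnion.1 hz
    exact ⟨i, ⟨z', hz'⟩, rfl⟩
  choose g g' hg using step
  set Z : ℕ → Λ := fun n => g'^[n] ⟨z, hz⟩ with hZ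
  set x : ℕ → Fin N := fun n => g (Z n) with hx
  have key : ∀ n, z = fw f (pre x n) (Z n) := by
    intro n
    induction n with
    | zero => simp [fw, hZ]
    | succ n ih =>
      rw [pre_succ_last, fw_append]
      have : fw f [x n] (Z (n + 1)) = Z n := by
        simp only [fw, hx, hZ, Function.iterate_succ_apply', id]
        exact (hg _).symm
      rw [this]; exact ih
  obtain ⟨D, -, hD⟩ := h.exists_D
  refine ⟨x, tendsto_nhds_unique (h.tendsto_fw x (fun n => Z n) fun n => hD _ (Z n).2) ?_⟩
  simp only [← key]
  exact tendsto_const_nhds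

lemma π_continuous (h : OSC lam f Λ U π) : Continuous π := by
  obtain ⟨c, C, -, -, hC0, hC1, hb⟩ := h.exists_bounds
  obtain ⟨D, hD0, hD⟩ := h.exists_D
  rw [continuous_iff_continuousAt]
  intro x
  rw [ContinuousAt, Metric.tendsto_nhds]
  intro ε hε
  have hlim : Tendsto (fun n => lp lam (pre x n) * (D + D)) atTop (𝓝 0) := by
    simpa using (h.lp_pre_tendsto x).mul_const (D + D)
  obtain ⟨n, hn⟩ := (hlim.eventually (gt_mem_nhds hε)).exists
  have hopen : ∀ᶠ y in 𝓝 x, ∀ j ∈ Finset.range n, y j = x j := by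
    rw [Filter.eventually_all_finset]
    intro j _
    have : Tendsto (fun y : ℕ → Fin N => y j) (𝓝 x) (𝓝 (x j)) :=
      (continuous_apply j).tendsto x
    rw [nhds_discrete (Fin N), tendsto_pure] at this
    exact this
  filter_upwards [hopen] with y hy
  have hpre : pre y n = pre x n := (pre_eq_iff _ _ _).2 fun j hj => hy j (Finset.mem_range.2 hj)
  rw [h.π_eq y n, h.π_eq x n, hpre, h.dist_fw]
  refine lt_of_le_of_lt (mul_le_mul_of_nonneg_left ?_ (h.lp_pos _).le) hn
  exact (dist_triangle_right _ _ 0).trans (add_le_add (hD _ (h.π_mem _)) (hD _ (h.π_mem _)))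

/-! ### Consequences of the open set condition -/

/-- Images of the open set under words, neither of which is a prefix of the other, are disjoint. -/
lemma disjoint_image (h : OSC lam f Λ U π) :
    ∀ u v : List (Fin N), ¬ u <+: v → ¬ v <+: u → Disjoint (fw f u '' U) (fw f v '' U) := by
  intro u
  induction u with
  | nil => intro v hv; exact absurd (List.nil_prefix) hv
  | cons i u ih =>
    intro v
    cases v with
    | nil => intro _ hv; exact absurd (List.nil_prefix) hv
    | cons j v =>
      intro h1 h2
      rw [Set.disjoint_left]
      rintro _ ⟨a, ha, rfl⟩ ⟨b, hb, hab⟩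
      by_cases hij : i = j
      · subst hij
        have hd := ih v (fun h' => h1 (by simpa using h')) (fun h' => h2 (by simpa using h'))
        have hinj : Function.Injective (f i) := h.fw_injective [i]
        exact Set.disjoint_left.1 hd ⟨a, ha, rfl⟩ ⟨b, hb, hinj hab⟩
      · exact Set.disjoint_left.1 (h.Udisj hij) ⟨_, h.fw_U u ha, rfl⟩ ⟨_, h.fw_U v hb, hab⟩

end OSC

/-- The stopping words at scale `r`: words whose ratio is at most `r`, while the ratio of the word
with its last letter removed is larger than `r`. -/
def cut {N : ℕ} (lam : Fin N → ℝ) (r : ℝ) : Set (List (Fin N)) :=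
  {u | u ≠ [] ∧ lp lam u ≤ r ∧ r < lp lam u.dropLast}

namespace OSC

lemma cut_antichain (h : OSC lam f Λ U π) {r : ℝ} {u v : List (Fin N)} (hu : u ∈ cut lam r)
    (hv : v ∈ cut lam r) (hne : u ≠ v) : ¬ u <+: v := by
  rintro ⟨t, rfl⟩
  have ht : t ≠ [] := by rintro rfl; simp at hne
  have h1 := hv.2.2
  rw [List.dropLast_append_of_ne_nil ht, lp_append] at h1
  have h2 : lp lam u * lp lam t.dropLast ≤ lp lam u * 1 :=
    mul_le_mul_of_nonneg_left (h.lp_le_one _) (h.lp_pos _).le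
  linarith [hu.2.1]

lemma cut_lower (h : OSC lam f Λ U π) {c : ℝ} (hc : ∀ i, c ≤ lam i) (hc0 : 0 < c)
    {r : ℝ} {u : List (Fin N)} (hu : u ∈ cut lam r) : c * r ≤ lp lam u := by
  obtain ⟨hne, -, h2⟩ := hu
  conv_rhs => rw [← List.dropLast_append_getLast hne]
  rw [lp_append, mul_comm c]
  simp only [lp_cons, lp_nil, mul_one]
  exact mul_le_mul h2.le (hc _) hc0.le (h.lp_pos _).le

lemma exists_cut (h : OSC lam f Λ U π) {r : ℝ} (hr0 : 0 < r) (hr1 : r < 1) (x : ℕ → Fin N) :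
    ∃ n, pre x n ∈ cut lam r := by
  classical
  have hex : ∃ n, lp lam (pre x n) ≤ r :=
    ((h.lp_pre_tendsto x).eventually (ge_mem_nhds hr0)).exists
  set n := Nat.find hex with hn
  have h1 := Nat.find_spec hex
  rcases hk : n with _ | k
  · rw [← hn, hk] at h1; simp at h1; linarith
  · refine ⟨k + 1, ?_, ?_, ?_⟩
    · intro h0; have := congrArg List.length h0; simp at this
    · rw [← hk]; exact h1
    · rw [pre_succ_last, List.dropLast_concat]
      exact not_le.1 (Nat.find_min hex (by rw [← hn, hk]; exact Nat.lt_succ_self k))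

/-- Bounded overlap: a set of diameter comparable to `r` meets a bounded number of pieces of
the attractor of size `r`. -/
lemma bounded_overlap (h : OSC lam f Λ U π) (K : ℝ) (hK : 0 ≤ K) :
    ∃ M : ℕ, ∀ r : ℝ, 0 < r → ∀ V : Set (EuclideanSpace ℝ (Fin d)),
      (∀ x ∈ V, ∀ y ∈ V, dist x y ≤ K * r) → ∀ S : Finset (List (Fin N)),
      (∀ u ∈ S, u ∈ cut lam r ∧ (fw f u '' Λ ∩ V).Nonempty) → S.card ≤ M := by
  obtain ⟨c, C, hc0, hc1, -, -, hb⟩ := h.exists_bounds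
  obtain ⟨D, hD0, hD⟩ := h.exists_D
  obtain ⟨u0, hu0⟩ := h.Une
  obtain ⟨ρ, hρ, hball⟩ := Metric.isOpen_iff.1 h.Uo u0 hu0
  -- every ball `fw u (ball u0 ρ)` lies in the ball of radius `R r` about a point of `V`
  set R : ℝ := ρ + dist u0 0 + D + K with hR
  have hRpos : 0 < R := by positivity
  obtain ⟨M, hM⟩ := exists_nat_ge ((R / (c * ρ)) ^ d)
  refine ⟨M, fun r hr V hV S hS => ?_⟩
  rcases S.eq_empty_or_nonempty with rfl | ⟨u1, hu1⟩
  · simp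
  obtain ⟨v, -, hvV⟩ := (hS u1 hu1).2
  set vol : Measure (EuclideanSpace ℝ (Fin d)) := volume
  have hdisj : (S : Set (List (Fin N))).PairwiseDisjoint
      (fun u => Metric.ball (fw f u u0) (c * r * ρ)) := by
    intro a ha b hb' hab
    have h1 := h.disjoint_image a b (h.cut_antichain (hS a ha).1 (hS b hb').1 hab)
      (h.cut_antichain (hS b hb').1 (hS a ha).1 hab.symm)
    have hsub : ∀ u ∈ S, Metric.ball (fw f u u0) (c * r * ρ) ⊆ fw f u '' U := by
      intro u hu
      refine (Metric.ball_subset_ball ?_).trans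
        ((h.ball_subset_image u u0 ρ).trans (image_mono hball))
      exact mul_le_mul_of_nonneg_right
        (h.cut_lower (fun i => (hb i).1) hc0 (hS u hu).1) hρ.le
    exact h1.mono (hsub a ha) (hsub b hb')
  have hsub : (⋃ u ∈ S, Metric.ball (fw f u u0) (c * r * ρ)) ⊆ Metric.ball v (R * r) := by
    intro y hy
    simp only [mem_iUnion, exists_prop] at hy
    obtain ⟨u, hu, hy⟩ := hy
    obtain ⟨_, ⟨z, hz, rfl⟩, hzV⟩ := (hS u hu).2
    have hlr : lp lam u ≤ r := (hS u hu).1.2.1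
    have e1 : dist (fw f u u0) (fw f u z) ≤ r * (dist u0 0 + D) := by
      rw [h.dist_fw]
      refine mul_le_mul hlr ?_ dist_nonneg hr.le
      exact (dist_triangle_right _ _ 0).trans (add_le_add_right (hD z hz) _)
    have e2 := hV _ hzV _ hvV
    have e3 : dist y (fw f u u0) < r * ρ := by
      refine lt_of_lt_of_le (Metric.mem_ball.1 hy) ?_
      have : 0 < r * ρ := by positivity
      nlinarith
    have e4 := dist_triangle4 y (fw f u u0) (fw f u z) v
    rw [Metric.mem_ball, hR]
    nlinarith
  have hcr : 0 < c * r * ρ := by positivity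
  have hvol : (S.card : ℝ≥0∞) * ENNReal.ofReal ((c * r * ρ) ^ d) * vol (Metric.ball 0 1)
      ≤ ENNReal.ofReal ((R * r) ^ d) * vol (Metric.ball 0 1) := by
    have h1 := measure_mono (μ := vol) hsub
    rw [measure_biUnion_finset hdisj fun _ _ => measurableSet_ball] at h1
    simp only [vol, Measure.addHaar_ball_of_pos volume _ hcr,
      Measure.addHaar_ball_of_pos volume _ (mul_pos hRpos hr), finrank_euclideanSpace,
      Fintype.card_fin, Finset.sum_const, nsmul_eq_mul] at h1
    simpa [mul_assoc] using h1
  have hb1 : vol (Metric.ball 0 1) ≠ 0 := (Metric.measure_ball_pos _ _ one_pos).ne'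
  have hb2 : vol (Metric.ball 0 1) ≠ ⊤ := measure_ball_lt_top.ne
  have h2 := (ENNReal.mul_le_mul_iff_left hb1 hb2).1 hvol
  have h3 : (S.card : ℝ) * (c * r * ρ) ^ d ≤ (R * r) ^ d := by
    rw [← ENNReal.ofReal_natCast, ← ENNReal.ofReal_mul (by positivity)] at h2
    exact (ENNReal.ofReal_le_ofReal_iff (by positivity)).1 h2
  have h4 : (S.card : ℝ) ≤ (R / (c * ρ)) ^ d := by
    rw [div_pow, le_div_iff₀ (by positivity)]
    have e : (c * r * ρ) ^ d = (c * ρ) ^ d * r ^ d := by rw [← mul_pow]; ring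
    rw [e, mul_pow R, ← mul_assoc] at h3
    exact le_of_mul_le_mul_right h3 (pow_pos hr d)
  exact_mod_cast h4.trans hM

end OSC

lemma finite_ncard_le {α : Type*} {s : Set α} {M : ℕ}
    (h : ∀ S : Finset α, (S : Set α) ⊆ s → S.card ≤ M) : s.Finite ∧ s.ncard ≤ M := by
  have hfin : s.Finite := by
    by_contra hinf
    obtain ⟨t, ht, htc⟩ := Set.Infinite.exists_subset_card_eq hinf (M + 1)
    have := h t ht
    omega
  refine ⟨hfin, ?_⟩
  rw [Set.ncard_eq_toFinset_card _ hfin]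
  exact h _ (by simp)

/-- The words `u` of size comparable to that of `a` whose piece of the attractor meets the piece
of `a`. -/
def nbr {N d : ℕ} (lam : Fin N → ℝ)
    (f : Fin N → EuclideanSpace ℝ (Fin d) → EuclideanSpace ℝ (Fin d))
    (Λ : Set (EuclideanSpace ℝ (Fin d))) (a : List (Fin N)) : Set (List (Fin N)) :=
  {u | u ∈ cut lam (lp lam a) ∧ (fw f u '' Λ ∩ fw f a '' Λ).Nonempty}

namespace OSC

lemma nbr_bound (h : OSC lam f Λ U π) :
    ∃ M : ℕ, ∀ a, (nbr lam f Λ a).Finite ∧ (nbr lam f Λ a).ncard ≤ M := by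
  obtain ⟨D, hD0, hD⟩ := h.exists_D
  obtain ⟨M, hM⟩ := h.bounded_overlap (D + D) (by positivity)
  refine ⟨M, fun a => ?_⟩
  have hV : ∀ x ∈ fw f a '' Λ, ∀ y ∈ fw f a '' Λ, dist x y ≤ (D + D) * lp lam a := by
    rintro _ ⟨x, hx, rfl⟩ _ ⟨y, hy, rfl⟩
    rw [h.dist_fw, mul_comm]
    exact mul_le_mul_of_nonneg_right
      ((dist_triangle_right _ _ 0).trans (add_le_add (hD _ hx) (hD _ hy))) (h.lp_pos _).le
  have key : ∀ S : Finset (List (Fin N)), (S : Set _) ⊆ nbr lam f Λ a → S.card ≤ M :=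
    fun S hS => hM _ (h.lp_pos a) _ hV S fun u hu => hS hu
  exact finite_ncard_le key

/-- Prepending a word maps neighbours to neighbours. -/
lemma image_nbr_subset (h : OSC lam f Λ U π) (v a : List (Fin N)) :
    (v ++ ·) '' nbr lam f Λ a ⊆ nbr lam f Λ (v ++ a) := by
  rintro _ ⟨u, ⟨⟨hu1, hu2, hu3⟩, ⟨z, ⟨z1, hz1, e1⟩, ⟨z2, hz2, e2⟩⟩⟩, rfl⟩
  refine ⟨⟨by simp [hu1], ?_, ?_⟩, fw f v z, ⟨z1, hz1, ?_⟩, ⟨z2, hz2, ?_⟩⟩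
  · simp only [lp_append]; exact mul_le_mul_of_nonneg_left hu2 (h.lp_pos v).le
  · simp only [lp_append, List.dropLast_append_of_ne_nil hu1]
    exact mul_lt_mul_of_pos_left hu3 (h.lp_pos v)
  · simp only [fw_append, e1]
  · simp only [fw_append, e2]

/-- There is a word `a` such that every neighbour of `v a` starts with `v`: for `a` with the
largest possible number of neighbours, the neighbours of `v a` are exactly the words `v u` with
`u` a neighbour of `a`. -/
lemma exists_isolating [NeZero N] (h : OSC lam f Λ U π) :
    ∃ a : List (Fin N), a ≠ [] ∧ ∀ v, ∀ u ∈ nbr lam f Λ (v ++ a), v <+: u := by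
  classical
  obtain ⟨M, hM⟩ := h.nbr_bound
  have hex : ∃ k, ∃ a : List (Fin N), a ≠ [] ∧ M - (nbr lam f Λ a).ncard = k :=
    ⟨_, [0], by simp, rfl⟩
  obtain ⟨a, ha, hk⟩ := Nat.find_spec hex
  refine ⟨a, ha, fun v u hu => ?_⟩
  -- minimality of `M - ncard` is maximality of the number of neighbours
  have hmin := Nat.find_min' hex ⟨v ++ a, by simp [ha], rfl⟩
  have h1 := (hM a).2
  have h2 := (hM (v ++ a)).2
  have hle : (nbr lam f Λ (v ++ a)).ncard ≤ (nbr lam f Λ a).ncard := by omega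
  have hinj : Function.Injective (fun w : List (Fin N) => v ++ w) :=
    fun _ _ => List.append_cancel_left
  have heq := Set.eq_of_subset_of_ncard_le (h.image_nbr_subset v a)
    (by rw [Set.ncard_image_of_injective _ hinj]; exact hle) (hM _).1
  rw [← heq] at hu
  obtain ⟨w, -, rfl⟩ := hu
  exact List.prefix_append _ _

/-- There is a finite word such that every point having a coding which contains it infinitely
often has no other coding. -/
lemma exists_unique_coding [NeZero N] (h : OSC lam f Λ U π) :
    ∃ m : ℕ, 0 < m ∧ ∃ a : Fin m → Fin N, ∀ x y : ℕ → Fin N,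
      (∀ K, ∃ n ≥ K, ∀ j : Fin m, x (n + j) = a j) → π x = π y → x = y := by
  obtain ⟨a, ha, hiso⟩ := h.exists_isolating
  refine ⟨a.length, List.length_pos_iff.2 ha, a.get, fun x y hx hxy => ?_⟩
  have key : ∀ K, ∃ n ≥ K, pre x n = pre y n := by
    intro K
    obtain ⟨n, hn, hxn⟩ := hx K
    refine ⟨n, hn, ?_⟩
    have hpre : pre x (n + a.length) = pre x n ++ a := by
      rw [pre_add]; congr 1
      conv_rhs => rw [← List.ofFn_get a]
      simp only [pre, shift]
      congr 1; funext j; exact hxn j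
    obtain ⟨k, hk⟩ := h.exists_cut (h.lp_pos (pre x n ++ a))
      (h.lp_lt_one (by simp [ha])) y
    have hmem : pre y k ∈ nbr lam f Λ (pre x n ++ a) := by
      refine ⟨hk, π x, ?_, ?_⟩
      · rw [hxy]; exact h.π_mem_image y k
      · rw [← hpre]; exact h.π_mem_image x _
    have hpx := hiso _ _ hmem
    have hlen : n ≤ k := by simpa using hpx.length_le
    have hpy := pre_prefix y hlen
    exact (List.prefix_of_prefix_length_le hpx hpy (by simp)).eq_of_length (by simp)
  funext j
  obtain ⟨n, hn, he⟩ := key (j + 1)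
  exact (pre_eq_iff _ _ _).1 he j (by omega)

end OSC

end geometry

end CoverSet

namespace CoverSet

/-! ### Bounds for the Hausdorff dimension of coded sets -/

section dims

variable {N d : ℕ} {lam : Fin N → ℝ}
    {f : Fin N → EuclideanSpace ℝ (Fin d) → EuclideanSpace ℝ (Fin d)}
    {Λ U : Set (EuclideanSpace ℝ (Fin d))}
    {π : (ℕ → Fin N) → EuclideanSpace ℝ (Fin d)}

namespace OSC

/-- Mass distribution principle: if a measure on the symbolic space charges `A` and gives every
cylinder of length at least `n0` around a point of `A` mass at most the `t`-th power of the ratio,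
then `π '' A` has dimension at least `t`. -/
lemma le_dimH (h : OSC lam f Λ U π) {ν : Measure (ℕ → Fin N)}
    {A : Set (ℕ → Fin N)} (hA0 : ν A ≠ 0) {t : ℝ} (ht : 0 < t) (n0 : ℕ)
    (hle : ∀ x ∈ A, ∀ m ≥ n0,
      ν {y | pre y m = pre x m} ≤ ENNReal.ofReal (lp lam (pre x m) ^ t)) :
    ENNReal.ofReal t ≤ dimH (π '' A) := by
  obtain ⟨c, C, hc0, hc1, -, -, hb⟩ := h.exists_bounds
  obtain ⟨M, hM⟩ := h.bounded_overlap 1 zero_le_one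
  -- words with ratio at most `ε0` have length at least `n0`
  set ε0 : ℝ := c ^ n0 / 2 with hε0
  have hcn : 0 < c ^ n0 := by positivity
  have hcn1 : c ^ n0 ≤ 1 := pow_le_one₀ hc0.le hc1.le
  have hε0pos : 0 < ε0 := by positivity
  have claim : ∀ r : ℝ, 0 < r → r ≤ ε0 → ∀ V : Set (EuclideanSpace ℝ (Fin d)),
      (∀ x ∈ V, ∀ y ∈ V, dist x y ≤ r) →
      ν (π ⁻¹' V ∩ A) ≤ M * ENNReal.ofReal (r ^ t) := by
    intro r hr0 hr V hV
    have hr1 : r < 1 := by linarith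
    set S : Set (List (Fin N)) :=
      {u | (u ∈ cut lam r ∧ (fw f u '' Λ ∩ V).Nonempty) ∧ ∃ x ∈ A, ∃ n, u = pre x n} with hS
    obtain ⟨hSfin, hScard⟩ : S.Finite ∧ S.ncard ≤ M :=
      finite_ncard_le fun T hT => hM r hr0 V (by simpa using hV) T fun u hu => (hT hu).1
    have hsub : π ⁻¹' V ∩ A ⊆ ⋃ u ∈ hSfin.toFinset, {y | pre y u.length = u} := by
      rintro x ⟨hxV, hxA⟩
      obtain ⟨n, hn⟩ := h.exists_cut hr0 hr1 x
      refine mem_iUnion₂.2 ⟨pre x n, ?_, by simp⟩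
      exact hSfin.mem_toFinset.2 ⟨⟨hn, π x, h.π_mem_image x n, hxV⟩, x, hxA, n, rfl⟩
    refine (measure_mono hsub).trans ((measure_biUnion_finset_le _ _).trans ?_)
    refine (Finset.sum_le_card_nsmul _ _ (ENNReal.ofReal (r ^ t)) ?_).trans ?_
    · intro u hu
      obtain ⟨⟨hcut, -⟩, x, hxA, n, rfl⟩ := hSfin.mem_toFinset.1 hu
      have hn : n0 ≤ n := by
        by_contra hlt
        have h1 := pow_le_lp (fun i => (hb i).1) hc0 (pre x n)
        have h2 : c ^ n0 ≤ c ^ n := pow_le_pow_of_le_one hc0.le hc1.le (by omega)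
        rw [length_pre] at h1
        have := hcut.2.1
        linarith
      rw [length_pre]
      refine (hle x hxA n hn).trans (ENNReal.ofReal_le_ofReal ?_)
      exact Real.rpow_le_rpow (h.lp_pos _).le hcut.2.1 ht.le
    · rw [nsmul_eq_mul, ← Set.ncard_eq_toFinset_card _ hSfin]
      gcongr
  -- `A` need not be measurable; only `ν.restrict A A = ν A` is used below
  set ν' : Measure (EuclideanSpace ℝ (Fin d)) := (ν.restrict A).map π with hν'
  have hπm : Measurable π := h.π_continuous.measurable
  have hν'le : ∀ r : ℝ, 0 < r → r ≤ ε0 → ∀ V : Set (EuclideanSpace ℝ (Fin d)),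
      Metric.ediam V ≤ ENNReal.ofReal r → ν' V ≤ M * ENNReal.ofReal (r ^ t) := by
    intro r hr0 hr V hV
    refine (measure_mono (subset_closure : V ⊆ closure V)).trans ?_
    rw [hν', Measure.map_apply hπm isClosed_closure.measurableSet,
      Measure.restrict_apply (hπm isClosed_closure.measurableSet)]
    refine claim r hr0 hr _ fun x hx y hy => ?_
    have := (Metric.edist_le_ediam_of_mem hx hy).trans ((Metric.ediam_closure V).le.trans hV)
    rw [edist_dist] at this
    exact (ENNReal.ofReal_le_ofReal_iff hr0.le).1 this
  have hmain : ((M : ℝ≥0∞) + 1)⁻¹ • ν' ≤ μH[t] := by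
    refine Measure.le_hausdorffMeasure t _ (ENNReal.ofReal ε0) (by simpa using hε0pos) ?_
    intro V hV
    rw [Measure.smul_apply, smul_eq_mul]
    have hne : Metric.ediam V ≠ ⊤ := ne_top_of_le_ne_top ENNReal.ofReal_ne_top hV
    by_cases h0 : Metric.ediam V = 0
    · have hz : ν' V ≤ 0 := by
        have hlim : Tendsto (fun r : ℝ => (M : ℝ≥0∞) * ENNReal.ofReal (r ^ t)) (𝓝[>] 0) (𝓝 0) := by
          have h1 : Tendsto (fun r : ℝ => r ^ t) (𝓝[>] 0) (𝓝 0) := by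
            have := (Real.continuousAt_rpow_const 0 t (Or.inr ht.le)).tendsto
            rw [Real.zero_rpow ht.ne'] at this
            exact this.mono_left nhdsWithin_le_nhds
          have h2 := ENNReal.Tendsto.const_mul (a := (M : ℝ≥0∞)) (ENNReal.tendsto_ofReal h1)
            (Or.inr (ENNReal.natCast_ne_top M))
          simpa using h2
        refine ge_of_tendsto hlim ?_
        filter_upwards [Ioo_mem_nhdsGT hε0pos] with r hr
        exact hν'le r hr.1 hr.2.le V (by simp [h0])
      simp [le_antisymm hz bot_le]
    · have hpos : 0 < (Metric.ediam V).toReal := ENNReal.toReal_pos h0 hne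
      have h1 := hν'le _ hpos (ENNReal.toReal_le_of_le_ofReal hε0pos.le hV) V
        (by rw [ENNReal.ofReal_toReal hne])
      rw [← ENNReal.ofReal_rpow_of_pos hpos, ENNReal.ofReal_toReal hne] at h1
      calc ((M : ℝ≥0∞) + 1)⁻¹ * ν' V
          ≤ ((M : ℝ≥0∞) + 1)⁻¹ * (((M : ℝ≥0∞) + 1) * Metric.ediam V ^ t) := by
            gcongr
            exact h1.trans (mul_le_mul_left (le_add_right le_rfl) _)
        _ = Metric.ediam V ^ t := by
            rw [← mul_assoc, ENNReal.inv_mul_cancel (by simp)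
              (ENNReal.add_ne_top.2 ⟨ENNReal.natCast_ne_top M, ENNReal.one_ne_top⟩), one_mul]
  have hne : μH[(t.toNNReal : ℝ)] (π '' A) ≠ 0 := by
    rw [Real.coe_toNNReal t ht.le]
    intro hz
    have h1 := hmain (π '' A)
    rw [hz, Measure.smul_apply, smul_eq_mul] at h1
    have h2 : ν' (π '' A) = 0 := by
      have := le_antisymm h1 bot_le
      refine (mul_eq_zero.1 this).resolve_left ?_
      exact ENNReal.inv_ne_zero.2
        (ENNReal.add_ne_top.2 ⟨ENNReal.natCast_ne_top M, ENNReal.one_ne_top⟩)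
    have h3 := Measure.preimage_null_of_map_null hπm.aemeasurable h2
    have h4 := measure_mono_null (subset_preimage_image π A) h3
    rw [Measure.restrict_apply_self] at h4
    exact hA0 h4
  exact le_dimH_of_hausdorffMeasure_ne_zero hne

/-- Covering bound: if infinitely many prefixes of every point of `B` have `p`-weight below
`e^(-β m)`, then `π '' B` is null for the `s`-dimensional Hausdorff measure as soon as
`∑ λ_i^s (p_i e^β)^q < 1` for some `q ≤ 0`. -/
lemma hausdorff_zero (h : OSC lam f Λ U π) {p : Fin N → ℝ} (hp : ∀ i, 0 < p i)
    {s q β : ℝ} (hs : 0 < s) (hq : q ≤ 0)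
    (hρ : ∑ i, lam i ^ s * (p i * Real.exp β) ^ q < 1) (B : Set (ℕ → Fin N))
    (hB : ∀ x ∈ B, ∃ᶠ m : ℕ in atTop,
      wordProd p (fun j : Fin m => x j) * Real.exp (β * m) < 1) :
    μH[s] (π '' B) = 0 := by
  classical
  obtain ⟨c, C, -, -, hC0, hC1, hb⟩ := h.exists_bounds
  obtain ⟨D, hD0, hD⟩ := h.exists_D
  set ρ : ℝ := ∑ i, lam i ^ s * (p i * Real.exp β) ^ q with hρdef
  have hρ0 : 0 ≤ ρ := Finset.sum_nonneg fun i _ =>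
    mul_nonneg (Real.rpow_nonneg (h.lam_mem i).1.le _)
      (Real.rpow_nonneg (mul_pos (hp i) (Real.exp_pos _)).le _)
  -- the `n`-th cover: pieces of light words of length at least `n`
  set T : ∀ n : ℕ, (Σ m : ℕ, (Fin (n + m) → Fin N)) → Set (EuclideanSpace ℝ (Fin d)) :=
    fun n w => if wordProd p w.2 * Real.exp (β * ((n + w.1 : ℕ) : ℝ)) < 1
      then fw f (List.ofFn w.2) '' Λ else ∅ with hT
  have hdiam : ∀ w : List (Fin N),
      Metric.ediam (fw f w '' Λ) ≤ ENNReal.ofReal ((D + D) * lp lam w) := by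
    intro w
    refine Metric.ediam_le ?_
    rintro _ ⟨x, hx, rfl⟩ _ ⟨y, hy, rfl⟩
    rw [edist_dist, h.dist_fw, mul_comm]
    refine ENNReal.ofReal_le_ofReal (mul_le_mul_of_nonneg_right ?_ (h.lp_pos _).le)
    exact (dist_triangle_right _ _ 0).trans (add_le_add (hD _ hx) (hD _ hy))
  have hlimR : Tendsto (fun n : ℕ => ENNReal.ofReal ((D + D) * C ^ n)) atTop (𝓝 0) := by
    have h1 := (tendsto_pow_atTop_nhds_zero_of_lt_one hC0.le hC1).const_mul (D + D)
    have h2 := ENNReal.tendsto_ofReal h1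
    simpa using h2
  have hle := Measure.hausdorffMeasure_le_liminf_tsum s (π '' B) (l := atTop)
    (fun n : ℕ => ENNReal.ofReal ((D + D) * C ^ n)) hlimR T
    (Eventually.of_forall fun n w => by
      simp only [hT]
      split_ifs
      · refine (hdiam _).trans (ENNReal.ofReal_le_ofReal ?_)
        refine mul_le_mul_of_nonneg_left ?_ (by positivity)
        refine (h.lp_le_pow (fun i => (hb i).2) hC0 _).trans ?_
        rw [List.length_ofFn]
        exact pow_le_pow_of_le_one hC0.le hC1.le (Nat.le_add_right _ _)
      · simp)
    (Eventually.of_forall fun n => by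
      rintro _ ⟨x, hx, rfl⟩
      obtain ⟨m, hm, hxm⟩ := (frequently_atTop.1 (hB x hx)) n
      obtain ⟨k, rfl⟩ := Nat.exists_eq_add_of_le hm
      refine mem_iUnion.2 ⟨⟨k, fun j => x j⟩, ?_⟩
      simp only [hT]
      rw [if_pos hxm]
      exact h.π_mem_image x _)
  -- Chebyshev: a light word satisfies `1 ≤ (p_w e^(β m))^q` because `q ≤ 0`
  have hterm : ∀ m : ℕ, ∀ w : Fin m → Fin N,
      wordProd p w * Real.exp (β * m) < 1 →
      lp lam (List.ofFn w) ^ s ≤ ∏ j, (lam (w j) ^ s * (p (w j) * Real.exp β) ^ q) := by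
    intro m w hw
    have e1 : wordProd p w * Real.exp (β * m) = ∏ j, (p (w j) * Real.exp β) := by
      rw [Finset.prod_mul_distrib, wordProd, Finset.prod_const, Finset.card_univ,
        Fintype.card_fin, ← Real.exp_nat_mul, mul_comm β]
    have e2 : ∏ j, (lam (w j) ^ s * (p (w j) * Real.exp β) ^ q)
        = lp lam (List.ofFn w) ^ s * (wordProd p w * Real.exp (β * m)) ^ q := by
      rw [e1, Finset.prod_mul_distrib, lp_ofFn, wordProd,
        Real.finsetProd_rpow _ _ fun i _ => (h.lam_mem _).1.le,
        Real.finsetProd_rpow _ _ fun i _ => (mul_pos (hp _) (Real.exp_pos _)).le]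
    rw [e2]
    have hpos : 0 < wordProd p w * Real.exp (β * m) :=
      mul_pos (Finset.prod_pos fun _ _ => hp _) (Real.exp_pos _)
    exact le_mul_of_one_le_right (Real.rpow_nonneg (h.lp_pos _).le _)
      (Real.one_le_rpow_of_pos_of_le_one_of_nonpos hpos hw.le hq)
  have hsum : ∀ n : ℕ, ∑' w, Metric.ediam (T n w) ^ s
      ≤ ENNReal.ofReal ((D + D) ^ s) * (ENNReal.ofReal ρ ^ n * (1 - ENNReal.ofReal ρ)⁻¹) := by
    intro n
    rw [ENNReal.tsum_sigma']
    have h1 : ∀ m : ℕ, ∑' w : Fin (n + m) → Fin N, Metric.ediam (T n ⟨m, w⟩) ^ s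
        ≤ ENNReal.ofReal ((D + D) ^ s) * ENNReal.ofReal ρ ^ (n + m) := by
      intro m
      rw [tsum_fintype, ← ENNReal.ofReal_pow hρ0, hρdef, Fintype.sum_pow,
        ENNReal.ofReal_sum_of_nonneg fun w _ => Finset.prod_nonneg fun j _ =>
          mul_nonneg (Real.rpow_nonneg (h.lam_mem _).1.le _)
            (Real.rpow_nonneg (mul_pos (hp _) (Real.exp_pos _)).le _), Finset.mul_sum]
      refine Finset.sum_le_sum fun w _ => ?_
      by_cases hw : wordProd p w * Real.exp (β * ((n + m : ℕ) : ℝ)) < 1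
      · have hTw : T n ⟨m, w⟩ = fw f (List.ofFn w) '' Λ := by simp only [hT]; rw [if_pos hw]
        rw [hTw, ← ENNReal.ofReal_mul (by positivity)]
        refine (ENNReal.rpow_le_rpow (hdiam _) hs.le).trans ?_
        rw [ENNReal.ofReal_rpow_of_pos (mul_pos (by positivity) (h.lp_pos _)),
          Real.mul_rpow (by positivity) (h.lp_pos _).le]
        exact ENNReal.ofReal_le_ofReal
          (mul_le_mul_of_nonneg_left (hterm _ w hw) (by positivity))
      · have hTw : T n ⟨m, w⟩ = ∅ := by simp only [hT]; rw [if_neg hw]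
        rw [hTw, Metric.ediam_empty, ENNReal.zero_rpow_of_pos hs]
        exact bot_le
    refine (ENNReal.tsum_le_tsum h1).trans ?_
    rw [ENNReal.tsum_mul_left]
    simp only [pow_add]
    rw [ENNReal.tsum_mul_left, ENNReal.tsum_geometric]
  have hρ1 : ENNReal.ofReal ρ < 1 := by
    rw [← ENNReal.ofReal_one]; exact (ENNReal.ofReal_lt_ofReal_iff one_pos).2 hρ
  have hlim : Tendsto (fun n : ℕ => ENNReal.ofReal ((D + D) ^ s) *
      (ENNReal.ofReal ρ ^ n * (1 - ENNReal.ofReal ρ)⁻¹)) atTop (𝓝 0) := by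
    have h1 := ENNReal.tendsto_pow_atTop_nhds_zero_of_lt_one hρ1
    have hfin : (1 - ENNReal.ofReal ρ)⁻¹ ≠ ⊤ :=
      ENNReal.inv_ne_top.2 (tsub_pos_of_lt hρ1).ne'
    have h2 := ENNReal.Tendsto.const_mul (a := ENNReal.ofReal ((D + D) ^ s))
      (ENNReal.Tendsto.mul_const h1 (Or.inr hfin)) (Or.inr ENNReal.ofReal_ne_top)
    simpa using h2
  refine le_antisymm (hle.trans ?_) bot_le
  have h3 := Filter.liminf_le_liminf (Eventually.of_forall hsum) (f := atTop)
  rw [hlim.liminf_eq] at h3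
  exact h3

end OSC

end dims

end CoverSet

namespace CoverSet

/-! ### Bernoulli measures on the symbolic space -/

section bernoulli

variable {N : ℕ} {r : Fin N → ℝ} {μ : Measure (ℕ → Fin N)}

/-- The distribution of one symbol: the measure on `Fin N` with weights `r`. -/
def stepM (r : Fin N → ℝ) : Measure (Fin N) :=
  ∑ i, ENNReal.ofReal (r i) • Measure.dirac i

/-- `μ` is the Bernoulli measure with (positive) weights `r`. -/
structure Bern (r : Fin N → ℝ) (μ : Measure (ℕ → Fin N)) : Prop where
  pos : ∀ i, 0 < r i
  sum : ∑ i, r i = 1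
  eq : μ = Measure.infinitePi fun _ => stepM r

lemma stepM_singleton (r : Fin N → ℝ) (i : Fin N) : stepM r {i} = ENNReal.ofReal (r i) := by
  classical
  rw [stepM, Measure.finsetSum_apply]
  simp [Set.indicator_apply]

lemma stepM_prob (h0 : ∀ i, 0 < r i) (h1 : ∑ i, r i = 1) : IsProbabilityMeasure (stepM r) := by
  refine ⟨?_⟩
  rw [stepM, Measure.finsetSum_apply]
  simp only [Measure.smul_apply, measure_univ, smul_eq_mul, mul_one]
  rw [← ENNReal.ofReal_sum_of_nonneg fun i _ => (h0 i).le, h1, ENNReal.ofReal_one]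

lemma measurableSet_box (s : Finset ℕ) (w : ℕ → Fin N) :
    MeasurableSet {o : ℕ → Fin N | ∀ k ∈ s, o k = w k} := by
  have : {o : ℕ → Fin N | ∀ k ∈ s, o k = w k} = ⋂ k ∈ s, (fun o => o k) ⁻¹' {w k} := by
    ext o; simp
  rw [this]
  exact Finset.measurableSet_biInter _ fun k _ => measurable_pi_apply k (measurableSet_singleton _)

lemma cylinder_eq_box {m : ℕ} (w : Fin m → Fin N) (w' : ℕ → Fin N) (h : ∀ j : Fin m, w' j = w j) :
    _root_.cylinder w = {o : ℕ → Fin N | ∀ k ∈ Finset.range m, o k = w' k} := by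
  ext o
  simp only [_root_.cylinder, mem_ofPred_eq, Finset.mem_range]
  exact ⟨fun ho k hk => by rw [ho ⟨k, hk⟩, ← h ⟨k, hk⟩], fun ho j => by rw [ho j j.2, h j]⟩

namespace Bern

lemma prob (h : Bern r μ) : IsProbabilityMeasure μ := by
  have := stepM_prob h.pos h.sum
  rw [h.eq]; infer_instance

lemma box (h : Bern r μ) (s : Finset ℕ) (w : ℕ → Fin N) :
    μ {o | ∀ k ∈ s, o k = w k} = ENNReal.ofReal (∏ k ∈ s, r (w k)) := by
  have := stepM_prob h.pos h.sum
  have : {o : ℕ → Fin N | ∀ k ∈ s, o k = w k} = Set.pi s fun k => {w k} := by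
    ext o; simp [Set.mem_pi]
  rw [this, h.eq, Measure.infinitePi_pi _ fun i _ => measurableSet_singleton _,
    ENNReal.ofReal_prod_of_nonneg fun k _ => (h.pos _).le]
  simp [stepM_singleton]

lemma cyl (h : Bern r μ) {m : ℕ} (w : Fin m → Fin N) (w' : ℕ → Fin N)
    (hw : ∀ j : Fin m, w' j = w j) :
    μ (_root_.cylinder w) = ENNReal.ofReal (wordProd r w) := by
  rw [cylinder_eq_box w w' hw, h.box, wordProd, Finset.prod_range]
  simp [hw]

end Bern

lemma bern_exists (h0 : ∀ i, 0 < r i) (h1 : ∑ i, r i = 1) :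
    ∃ ν : Measure (ℕ → Fin N), Bern r ν := ⟨_, h0, h1, rfl⟩

/-- A probability measure with the right values on cylinders is the Bernoulli measure. -/
lemma bern_of_cylinder [NeZero N] [IsProbabilityMeasure μ] (h0 : ∀ i, 0 < r i)
    (h1 : ∑ i, r i = 1)
    (hμ : ∀ (m : ℕ) (w : Fin m → Fin N), μ (_root_.cylinder w) = ENNReal.ofReal (wordProd r w)) :
    Bern r μ := by
  classical
  refine ⟨h0, h1, ?_⟩
  have := stepM_prob h0 h1
  obtain ⟨ν, hν⟩ := bern_exists h0 h1
  refine Measure.eq_infinitePi _ fun s t ht => ?_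
  rw [← Measure.infinitePi_pi (fun _ => stepM r) fun i _ => ht i, ← hν.eq]
  obtain ⟨m, hm⟩ : ∃ m, s ⊆ Finset.range m := s.exists_nat_subset_range
  set S : Finset (Fin m → Fin N) :=
    Finset.univ.filter fun w => ∀ j : Fin m, (j : ℕ) ∈ s → w j ∈ t j with hS
  have hbox : Set.pi (s : Set ℕ) t = ⋃ w ∈ S, _root_.cylinder w := by
    ext o
    simp only [Set.mem_pi, mem_iUnion, exists_prop, hS, Finset.mem_filter, Finset.mem_univ,
      true_and, Finset.mem_coe]
    constructor
    · intro ho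
      exact ⟨fun j => o j, fun j hj => ho j hj, fun j => rfl⟩
    · rintro ⟨w, hw, how⟩ k hk
      have hkm : k < m := Finset.mem_range.1 (hm hk)
      have := hw ⟨k, hkm⟩ hk
      rw [← how ⟨k, hkm⟩] at this
      exact this
  have hext : ∀ w : Fin m → Fin N, ∃ w' : ℕ → Fin N, ∀ j : Fin m, w' j = w j := fun w =>
    ⟨fun k => if hk : k < m then w ⟨k, hk⟩ else 0, fun j => by simp⟩
  have hdisj : (S : Set (Fin m → Fin N)).PairwiseDisjoint _root_.cylinder := by
    intro a _ b _ hab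
    rw [Function.onFun, Set.disjoint_left]
    exact fun o ho1 ho2 => hab (funext fun j => (ho1 j).symm.trans (ho2 j))
  have hmeas : ∀ w ∈ S, MeasurableSet (_root_.cylinder w) := by
    intro w _
    obtain ⟨w', hw'⟩ := hext w
    rw [cylinder_eq_box w w' hw']
    exact measurableSet_box _ _
  rw [hbox, measure_biUnion_finset hdisj hmeas, measure_biUnion_finset hdisj hmeas]
  refine Finset.sum_congr rfl fun w _ => ?_
  obtain ⟨w', hw'⟩ := hext w
  rw [hμ, hν.cyl w w' hw']

namespace Bern

/-- Strong law of large numbers for functions of one symbol. -/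
lemma slln (h : Bern r μ) (g : Fin N → ℝ) :
    ∀ᵐ x ∂μ, Tendsto (fun n : ℕ => (∑ j ∈ Finset.range n, g (x j)) / n) atTop
      (𝓝 (∑ i, r i * g i)) := by
  have := stepM_prob h.pos h.sum
  have := h.prob
  have hg : Measurable g := measurable_of_finite g
  have hmap : ∀ j, μ.map (fun x => x j) = stepM r := fun j => by
    rw [h.eq]; exact Measure.infinitePi_map_eval (fun _ => stepM r) j
  have hmapg : ∀ j, μ.map (fun x => g (x j)) = (stepM r).map g := fun j => by
    rw [← hmap j, Measure.map_map hg (measurable_pi_apply j)]; rfl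
  have hind : ProbabilityTheory.iIndepFun (fun j (x : ℕ → Fin N) => g (x j)) μ := by
    rw [h.eq]
    exact ProbabilityTheory.iIndepFun_infinitePi (X := fun _ => g) fun _ => hg
  have hm : ∀ j, Measurable fun x : ℕ → Fin N => g (x j) := fun j =>
    hg.comp (measurable_pi_apply j)
  have hgi : Integrable g (stepM r) := .of_finite
  have hint : Integrable (fun x : ℕ → Fin N => g (x 0)) μ := by
    have := hgi
    rw [← hmap 0] at this
    exact this.comp_measurable (measurable_pi_apply 0)
  have key := ProbabilityTheory.strong_law_ae_real (μ := μ)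
    (fun j (x : ℕ → Fin N) => g (x j)) hint
    (fun i j hij => hind.indepFun hij)
    (fun i => ⟨(hm i).aemeasurable, (hm 0).aemeasurable, by rw [hmapg, hmapg]⟩)
  have hval : ∫ x, g (x 0) ∂μ = ∑ i, r i * g i := by
    have h1 : ∫ x, g (x 0) ∂μ = ∫ i, g i ∂(μ.map fun x => x 0) :=
      (integral_map (measurable_pi_apply 0).aemeasurable hg.aestronglyMeasurable).symm
    rw [h1, hmap 0, integral_fintype hgi]
    refine Finset.sum_congr rfl fun i _ => ?_
    rw [measureReal_def, stepM_singleton, ENNReal.toReal_ofReal (h.pos i).le, smul_eq_mul]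
  rw [hval] at key
  exact key

lemma window_eq {m : ℕ} (w : Fin m → Fin N) (n : ℕ) (w' : ℕ → Fin N)
    (hw : ∀ j : Fin m, w' (n + j) = w j) :
    {o : ℕ → Fin N | ∀ j : Fin m, o (n + j) = w j}
      = {o | ∀ k ∈ (Finset.range m).image (n + ·), o k = w' k} := by
  ext o
  simp only [mem_ofPred_eq, Finset.mem_image, Finset.mem_range]
  constructor
  · rintro ho _ ⟨j, hj, rfl⟩
    rw [ho ⟨j, hj⟩, ← hw ⟨j, hj⟩]
  · intro ho j
    rw [ho _ ⟨j, j.2, rfl⟩, hw j]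

/-- Shift invariance: the probability to read the word `w` at position `n`. -/
lemma window (h : Bern r μ) {m : ℕ} (w : Fin m → Fin N) (n : ℕ) :
    μ {o | ∀ j : Fin m, o (n + j) = w j} = ENNReal.ofReal (wordProd r w) := by
  rcases Nat.eq_zero_or_pos m with rfl | hm
  · have := h.prob
    simp [wordProd]
  set w' : ℕ → Fin N := fun k => w ⟨(k - n) % m, Nat.mod_lt _ hm⟩ with hw'
  have hw : ∀ j : Fin m, w' (n + j) = w j := fun j => by
    simp [hw', Nat.mod_eq_of_lt j.2]
  rw [window_eq w n w' hw, h.box, Finset.prod_image (by intro a _ b _ hab; simpa using hab),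
    Finset.prod_range, wordProd]
  simp [hw]

/-- Reading disjoint windows gives independent trials. -/
lemma no_hit (h : Bern r μ) {m : ℕ} (hm : 0 < m) (w : Fin m → Fin N) (K J : ℕ) :
    μ {o | ∀ i < J, ¬ ∀ j : Fin m, o (K + i * m + j) = w j}
      = ENNReal.ofReal (1 - wordProd r w) ^ J := by
  classical
  have := h.prob
  set H : ℕ → Set (ℕ → Fin N) := fun i => {o | ∀ j : Fin m, o (K + i * m + j) = w j} with hH
  set w' : ℕ → Fin N := fun k => w ⟨(k - K) % m, Nat.mod_lt _ hm⟩ with hw'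
  have hw : ∀ i, ∀ j : Fin m, w' (K + i * m + j) = w j := fun i j => by
    simp only [hw']
    congr 1
    ext
    simp only [add_assoc, Nat.add_sub_cancel_left]
    rw [add_comm, Nat.add_mul_mod_self_right, Nat.mod_eq_of_lt j.2]
  have hHm : ∀ i, MeasurableSet (H i) := fun i => by
    rw [hH]; simp only []
    rw [window_eq w _ w' (hw i)]
    exact measurableSet_box _ _
  have hHμ : ∀ i, μ (H i) = ENNReal.ofReal (wordProd r w) := fun i => h.window w _
  have hind : ProbabilityTheory.iIndepSet H μ := by
    rw [ProbabilityTheory.iIndepSet_iff_meas_biInter hHm]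
    intro s
    have e1 : (⋂ i ∈ s, H i) = {o : ℕ → Fin N | ∀ k ∈
        (s ×ˢ Finset.range m).image (fun q : ℕ × ℕ => K + q.1 * m + q.2), o k = w' k} := by
      ext o
      simp only [mem_iInter, hH, mem_ofPred_eq, Finset.mem_image, Finset.mem_product,
        Finset.mem_range]
      constructor
      · rintro ho _ ⟨⟨i, j⟩, ⟨hi, hj⟩, rfl⟩
        exact (ho i hi ⟨j, hj⟩).trans (hw i ⟨j, hj⟩).symm
      · intro ho i hi j
        rw [ho _ ⟨(i, j), ⟨hi, j.2⟩, rfl⟩]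
        exact hw i j
    have hinj : Set.InjOn (fun q : ℕ × ℕ => K + q.1 * m + q.2)
        (s ×ˢ Finset.range m : Finset (ℕ × ℕ)) := by
      rintro ⟨i, j⟩ h1 ⟨i', j'⟩ h2 heq
      simp only [Finset.coe_product, Finset.coe_range, mem_prod, mem_Iio, Finset.mem_coe] at h1 h2
      have heq' : i * m + j = i' * m + j' := by simp only [] at heq; omega
      have hj : j = j' := by
        have := congrArg (· % m) heq'
        simpa [Nat.mul_add_mod_of_lt, Nat.add_mod, Nat.mod_eq_of_lt h1.2,
          Nat.mod_eq_of_lt h2.2] using this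
      subst hj
      have : i * m = i' * m := by omega
      rw [Nat.eq_of_mul_eq_mul_right hm this]
    rw [e1, h.box, Finset.prod_image hinj, Finset.prod_product,
      ENNReal.ofReal_prod_of_nonneg fun i _ => Finset.prod_nonneg fun j _ => (h.pos _).le]
    refine Finset.prod_congr rfl fun i _ => ?_
    rw [hHμ, wordProd, Finset.prod_range]
    simp only [hw]
  have e2 : {o : ℕ → Fin N | ∀ i < J, ¬ ∀ j : Fin m, o (K + i * m + j) = w j}
      = ⋂ i ∈ Finset.range J, (H i)ᶜ := by
    ext o; simp [hH]
  have h3 := ProbabilityTheory.iIndep.meas_biInter (S := Finset.range J) (s := fun i => (H i)ᶜ) hind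
    (fun i _ => (MeasurableSpace.measurableSet_generateFrom (mem_singleton _)).compl)
  rw [e2, h3]
  have hnn : 0 ≤ wordProd r w := Finset.prod_nonneg fun _ _ => (h.pos _).le
  simp only [prob_compl_eq_one_sub (hHm _), hHμ, Finset.prod_const, Finset.card_range]
  rw [← ENNReal.ofReal_one, ← ENNReal.ofReal_sub _ hnn]

lemma weight_pos (h : Bern r μ) {m : ℕ} (w : Fin m → Fin N) : 0 < wordProd r w :=
  Finset.prod_pos fun _ _ => h.pos _

lemma weight_le_one (h : Bern r μ) {m : ℕ} (w : Fin m → Fin N) : wordProd r w ≤ 1 := by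
  refine Finset.prod_le_one (fun _ _ => (h.pos _).le) fun j _ => ?_
  rw [← h.sum]
  exact Finset.single_le_sum (fun i _ => (h.pos i).le) (Finset.mem_univ _)

/-- Almost every sequence contains a given word infinitely often. -/
lemma infinitely_often (h : Bern r μ) {m : ℕ} (hm : 0 < m) (w : Fin m → Fin N) :
    ∀ᵐ x ∂μ, ∀ K, ∃ n ≥ K, ∀ j : Fin m, x (n + j) = w j := by
  rw [ae_all_iff]
  intro K
  rw [ae_iff]
  have hlt : ENNReal.ofReal (1 - wordProd r w) < 1 := by
    rw [← ENNReal.ofReal_one]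
    exact (ENNReal.ofReal_lt_ofReal_iff one_pos).2 (by linarith [h.weight_pos w])
  refine le_antisymm (ge_of_tendsto' (ENNReal.tendsto_pow_atTop_nhds_zero_of_lt_one hlt)
    fun J => ?_) bot_le
  rw [← h.no_hit hm w K J]
  refine measure_mono fun x hx i _ hj => hx ⟨K + i * m, Nat.le_add_right _ _, hj⟩

end Bern

end bernoulli

end CoverSet

namespace CoverSet

/-! ### Growth of `ℓ` -/

section growth

variable {ℓ : ℕ → ℕ} {α : ℝ}

lemma eventually_mul_log_lt
    (hℓ : Filter.liminf (fun n : ℕ => (ℓ n : ℝ) / Real.log n) atTop = 1 / α)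
    {c : ℝ} (hc : c < 1 / α) : ∀ᶠ n : ℕ in atTop, c * Real.log n < ℓ n := by
  have hb : IsBoundedUnder (· ≥ ·) atTop fun n : ℕ => (ℓ n : ℝ) / Real.log n :=
    ⟨0, eventually_map.2 (Eventually.of_forall fun n =>
      div_nonneg (Nat.cast_nonneg _) (Real.log_natCast_nonneg n))⟩
  have h1 := eventually_lt_of_lt_liminf (f := atTop) (hc.trans_eq hℓ.symm) hb
  filter_upwards [h1, eventually_ge_atTop 2] with n hn h2
  have : 0 < Real.log n := Real.log_pos (by exact_mod_cast h2)
  rwa [lt_div_iff₀ this] at hn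

lemma frequently_lt_mul_log (hα : 0 < α)
    (hℓ : Filter.liminf (fun n : ℕ => (ℓ n : ℝ) / Real.log n) atTop = 1 / α)
    {c : ℝ} (hc : 1 / α < c) : ∃ᶠ n : ℕ in atTop, (ℓ n : ℝ) < c * Real.log n := by
  intro hcon
  have h1 : ∀ᶠ n : ℕ in atTop, c ≤ (ℓ n : ℝ) / Real.log n := by
    filter_upwards [hcon, eventually_ge_atTop 2] with n hn h2
    have : 0 < Real.log n := Real.log_pos (by exact_mod_cast h2)
    rw [le_div_iff₀ this]
    exact not_lt.1 hn
  rw [liminf_eq] at hℓ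
  -- an unbounded set of lower bounds would give the junk value `0` of the real supremum
  by_cases hbdd : BddAbove {a : ℝ | ∀ᶠ n : ℕ in atTop, a ≤ (ℓ n : ℝ) / Real.log n}
  · have := le_csSup hbdd h1
    linarith
  · rw [Real.sSup_of_not_bddAbove hbdd] at hℓ
    have : 0 < 1 / α := by positivity
    linarith

lemma tendsto_of_liminf (hα : 0 < α)
    (hℓ : Filter.liminf (fun n : ℕ => (ℓ n : ℝ) / Real.log n) atTop = 1 / α) :
    Tendsto ℓ atTop atTop := by
  have hc : 1 / (2 * α) < 1 / α := one_div_lt_one_div_of_lt hα (by linarith)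
  have h1 : Tendsto (fun n : ℕ => 1 / (2 * α) * Real.log n) atTop atTop :=
    (Real.tendsto_log_atTop.comp tendsto_natCast_atTop_atTop).const_mul_atTop (by positivity)
  refine tendsto_natCast_atTop_iff (R := ℝ).1 (tendsto_atTop_mono' _ ?_ h1)
  filter_upwards [eventually_mul_log_lt hℓ hc] with n hn using hn.le

lemma eventually_linear_le_exp (A : ℝ) {c η : ℝ} (hc : 0 < c) (hη : 0 < η) :
    ∀ᶠ y : ℝ in atTop, A * y + y ≤ Real.exp (η * y) / (2 * c * y) := by
  have h := (isLittleO_pow_exp_pos_mul_atTop 3 hη).def (c := 1 / (2 * c)) (by positivity)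
  filter_upwards [h, eventually_ge_atTop (A + 1), eventually_gt_atTop 0] with y h1 h2 h3
  rw [Real.norm_of_nonneg (by positivity), Real.norm_of_nonneg (by positivity)] at h1
  have h4 : y ^ 2 ≤ Real.exp (η * y) / (2 * c * y) := by
    rw [le_div_iff₀ (by positivity)]
    have := mul_le_mul_of_nonneg_left h1 (by positivity : 0 ≤ 2 * c)
    have e : 2 * c * (1 / (2 * c) * Real.exp (η * y)) = Real.exp (η * y) := by
      field_simp
    nlinarith
  nlinarith

end growth

/-! ### Which sequences are covered -/

section covering

variable {N : ℕ} {p : Fin N → ℝ} {μ : Measure (ℕ → Fin N)} {ℓ : ℕ → ℕ} {α : ℝ}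

lemma notMem_limsup_iff (x o : ℕ → Fin N) : x ∉ limsupCylinders ℓ o ↔
    ∃ K, ∀ n ≥ K, ¬ ∀ j : Fin (ℓ n), x j = o (n + j) := by
  simp only [limsupCylinders, _root_.cylinder, mem_iInter, mem_iUnion, mem_ofPred_eq, exists_prop]
  push Not
  rfl

lemma measurableSet_limsup :
    MeasurableSet {z : (ℕ → Fin N) × (ℕ → Fin N) | z.2 ∈ limsupCylinders ℓ z.1} := by
  have : {z : (ℕ → Fin N) × (ℕ → Fin N) | z.2 ∈ limsupCylinders ℓ z.1}
      = ⋂ k, ⋃ n, ⋃ _ : k ≤ n, ⋂ j : Fin (ℓ n), {z | z.2 j = z.1 (n + j)} := by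
    ext z
    simp [limsupCylinders, _root_.cylinder]
  rw [this]
  refine .iInter fun k => .iUnion fun n => .iUnion fun _ => .iInter fun j => ?_
  exact measurableSet_eq_fun ((measurable_pi_apply _).comp measurable_snd)
    ((measurable_pi_apply _).comp measurable_fst)

/-- A union bound over all heavy words of length `m`: missing one of them at all positions in
`[K, n]` means missing it in about `n / m` independent disjoint windows. -/
lemma Bern.bad_le (h : Bern p μ) (K n m : ℕ) (hm : 0 < m) {β c y : ℝ} (hβ : 0 < β)
    (hc : 0 < c) (hy : y = Real.log n) (hy0 : 0 < y) (hmc : (m : ℝ) ≤ c * y) (hK : 2 * K ≤ n)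
    (hn : 0 < n)
    (hA : c * Real.log N * y + y ≤ Real.exp ((1 - β * c) * y) / (2 * c * y)) :
    μ {o | ∃ w : Fin m → Fin N, Real.exp (-β * m) ≤ wordProd p w ∧
      ∀ k, K ≤ k → k ≤ n → ¬ ∀ j : Fin m, o (k + j) = w j} ≤ ENNReal.ofReal (1 / n) := by
  classical
  set J := (n - K) / m + 1 with hJ
  set S : Finset (Fin m → Fin N) :=
    Finset.univ.filter fun w => Real.exp (-β * m) ≤ wordProd p w with hS
  have hsub : {o : ℕ → Fin N | ∃ w : Fin m → Fin N, Real.exp (-β * m) ≤ wordProd p w ∧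
      ∀ k, K ≤ k → k ≤ n → ¬ ∀ j : Fin m, o (k + j) = w j}
      ⊆ ⋃ w ∈ S, {o : ℕ → Fin N | ∀ i < J, ¬ ∀ j : Fin m, o (K + i * m + j) = w j} := by
    rintro o ⟨w, hw, ho⟩
    simp only [mem_iUnion]
    refine ⟨w, by simpa [hS] using hw, fun i hi => ho _ (Nat.le_add_right _ _) ?_⟩
    have h1 : i * m ≤ (n - K) / m * m := Nat.mul_le_mul_right _ (by omega)
    have h2 := Nat.div_mul_le_self (n - K) m
    omega
  have hnR : (0 : ℝ) < n := by exact_mod_cast hn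
  have hmR : (0 : ℝ) < m := by exact_mod_cast hm
  have hexpy : Real.exp y = n := by rw [hy, Real.exp_log hnR]
  have hJR : (n : ℝ) / (2 * c * y) ≤ J := by
    have h1 : n - K < J * m := by
      rw [hJ, mul_comm]; exact Nat.lt_mul_div_succ _ hm
    have h2 : n ≤ 2 * (J * m) := by omega
    have h3 : (n : ℝ) ≤ 2 * (J * m) := by exact_mod_cast h2
    rw [div_le_iff₀ (by positivity)]
    have : (J : ℝ) * m ≤ J * (c * y) := mul_le_mul_of_nonneg_left hmc (Nat.cast_nonneg _)
    linarith
  have hone : ∀ w ∈ S, μ {o | ∀ i < J, ¬ ∀ j : Fin m, o (K + i * m + j) = w j}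
      ≤ ENNReal.ofReal (Real.exp (-(c * Real.log N * y + y))) := by
    intro w hw
    have hw : Real.exp (-β * m) ≤ wordProd p w := by simpa [hS] using hw
    rw [h.no_hit hm, ← ENNReal.ofReal_pow (by linarith [h.weight_le_one w])]
    refine ENNReal.ofReal_le_ofReal ?_
    have h1 : 1 - wordProd p w ≤ Real.exp (-wordProd p w) := by
      have := Real.add_one_le_exp (-wordProd p w); linarith
    refine (pow_le_pow_left₀ (by linarith [h.weight_le_one w]) h1 J).trans ?_
    rw [← Real.exp_nat_mul, Real.exp_le_exp]
    have h2 : Real.exp (-(β * c) * y) ≤ wordProd p w := by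
      refine le_trans (Real.exp_le_exp.2 ?_) hw
      have := mul_le_mul_of_nonneg_left hmc hβ.le
      linarith
    have h3 : (n : ℝ) / (2 * c * y) * Real.exp (-(β * c) * y) ≤ J * wordProd p w :=
      mul_le_mul hJR h2 (Real.exp_pos _).le (Nat.cast_nonneg _)
    have h4 : (n : ℝ) / (2 * c * y) * Real.exp (-(β * c) * y)
        = Real.exp ((1 - β * c) * y) / (2 * c * y) := by
      rw [show (1 - β * c) * y = y + -(β * c) * y by ring, Real.exp_add, hexpy]; ring
    linarith
  have hNpos : 0 < N := by
    by_contra h0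
    have : N = 0 := by omega
    subst this
    simpa using h.sum
  have hNR : (1 : ℝ) ≤ N := by exact_mod_cast hNpos
  calc _ ≤ μ (⋃ w ∈ S, {o | ∀ i < J, ¬ ∀ j : Fin m, o (K + i * m + j) = w j}) :=
        measure_mono hsub
    _ ≤ ∑ w ∈ S, μ {o | ∀ i < J, ¬ ∀ j : Fin m, o (K + i * m + j) = w j} :=
        measure_biUnion_finset_le _ _
    _ ≤ ∑ w ∈ S, ENNReal.ofReal (Real.exp (-(c * Real.log N * y + y))) :=
        Finset.sum_le_sum hone
    _ = ENNReal.ofReal (S.card * Real.exp (-(c * Real.log N * y + y))) := by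
        rw [Finset.sum_const, nsmul_eq_mul, ENNReal.ofReal_mul (Nat.cast_nonneg _),
          ENNReal.ofReal_natCast]
    _ ≤ ENNReal.ofReal (1 / n) := by
        refine ENNReal.ofReal_le_ofReal ?_
        have hcard : (S.card : ℝ) ≤ Real.exp (c * Real.log N * y) := by
          have h1 : S.card ≤ N ^ m := by
            refine (Finset.card_le_univ _).trans_eq ?_
            simp
          have h2 : ((N : ℝ)) ^ m = Real.exp (m * Real.log N) := by
            rw [Real.exp_nat_mul, Real.exp_log (by linarith)]
          calc (S.card : ℝ) ≤ (N : ℝ) ^ m := by exact_mod_cast h1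
            _ = Real.exp (m * Real.log N) := h2
            _ ≤ _ := by
              rw [Real.exp_le_exp]
              have := mul_le_mul_of_nonneg_right hmc (Real.log_nonneg hNR)
              linarith
        calc (S.card : ℝ) * Real.exp (-(c * Real.log N * y + y))
            ≤ Real.exp (c * Real.log N * y) * Real.exp (-(c * Real.log N * y + y)) :=
              mul_le_mul_of_nonneg_right hcard (Real.exp_pos _).le
          _ = 1 / n := by
              rw [← Real.exp_add, show c * Real.log N * y + -(c * Real.log N * y + y) = -y by ring,
                Real.exp_neg, hexpy, one_div]

/-- Almost surely, for infinitely many `n` every word of length `ℓ n` whose probability is at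
least `exp (-β ℓ n)` occurs in `o` at a position between `K` and `n`. -/
lemma Bern.ae_hits (h : Bern p μ) (hα : 0 < α)
    (hℓ : Filter.liminf (fun n : ℕ => (ℓ n : ℝ) / Real.log n) atTop = 1 / α)
    {β : ℝ} (hβ : 0 < β) (hβα : β < α) :
    ∀ᵐ o ∂μ, ∀ K, ∃ᶠ n in atTop, ∀ w : Fin (ℓ n) → Fin N,
      Real.exp (-β * ℓ n) ≤ wordProd p w → ∃ k, K ≤ k ∧ k ≤ n ∧ ∀ j : Fin (ℓ n), o (k + j) = w j := by
  rw [ae_all_iff]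
  intro K
  set bad : ℕ → Set (ℕ → Fin N) := fun n => {o | ∃ w : Fin (ℓ n) → Fin N,
    Real.exp (-β * ℓ n) ≤ wordProd p w ∧
      ∀ k, K ≤ k → k ≤ n → ¬ ∀ j : Fin (ℓ n), o (k + j) = w j} with hbad
  obtain ⟨c, hc1, hc2⟩ := exists_between (one_div_lt_one_div_of_lt hβ hβα)
  have hc0 : 0 < c := lt_trans (by positivity) hc1
  have hη : 0 < 1 - β * c := by
    rw [lt_div_iff₀ hβ] at hc2; linarith
  have hlog : Tendsto (fun n : ℕ => Real.log n) atTop atTop :=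
    Real.tendsto_log_atTop.comp tendsto_natCast_atTop_atTop
  have hfreq : ∃ᶠ n in atTop, μ (bad n) ≤ ENNReal.ofReal (1 / (n : ℝ)) := by
    refine ((frequently_lt_mul_log hα hℓ hc1).and_eventually
      (((tendsto_of_liminf hα hℓ).eventually_gt_atTop 0).and
        ((hlog.eventually (eventually_linear_le_exp (c * Real.log N) hc0 hη)).and
          ((hlog.eventually_gt_atTop 0).and
            ((eventually_ge_atTop (2 * K)).and (eventually_gt_atTop 0)))))).mono ?_
    rintro n ⟨h1, h2, h3, h4, h5, h6⟩
    exact h.bad_le K n (ℓ n) h2 hβ hc0 rfl h4 h1.le h5 h6 h3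
  have hlim : Tendsto (fun n : ℕ => ENNReal.ofReal (1 / (n : ℝ))) atTop (𝓝 0) := by
    have := ENNReal.tendsto_ofReal (tendsto_one_div_atTop_nhds_zero_nat (𝕜 := ℝ))
    simpa using this
  have hM : ∀ M, μ (⋂ n, ⋂ _ : M ≤ n, bad n) = 0 := by
    intro M
    by_contra hne
    have hpos : 0 < μ (⋂ n, ⋂ _ : M ≤ n, bad n) := pos_iff_ne_zero.2 hne
    obtain ⟨n, h1, h2, h3⟩ := (hfreq.and_eventually
      ((hlim.eventually (gt_mem_nhds hpos)).and (eventually_ge_atTop M))).exists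
    have : μ (⋂ n, ⋂ _ : M ≤ n, bad n) ≤ μ (bad n) := measure_mono (iInter₂_subset n h3)
    exact absurd (this.trans h1) (not_le.2 h2)
  refine measure_mono_null ?_ (measure_iUnion_null hM)
  intro o ho
  have ho : ¬ ∃ᶠ n in atTop, ∀ w : Fin (ℓ n) → Fin N, Real.exp (-β * ℓ n) ≤ wordProd p w →
    ∃ k, K ≤ k ∧ k ≤ n ∧ ∀ j : Fin (ℓ n), o (k + j) = w j := ho
  rw [not_frequently, eventually_atTop] at ho
  obtain ⟨M, hM⟩ := ho
  refine mem_iUnion.2 ⟨M, mem_iInter₂.2 fun n hn => ?_⟩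
  have := hM n hn
  push Not at this
  obtain ⟨w, hw, hk⟩ := this
  refine ⟨w, hw, fun k h1 h2 h3 => ?_⟩
  obtain ⟨j, hj⟩ := hk k h1 h2
  exact hj (h3 j)

/-- Uncovered sequences have light prefixes infinitely often. -/
lemma frequently_light (hmono : Monotone ℓ) (hlim : Tendsto ℓ atTop atTop)
    {β : ℝ} {o x : ℕ → Fin N}
    (ho : ∀ K, ∃ᶠ n in atTop, ∀ w : Fin (ℓ n) → Fin N, Real.exp (-β * ℓ n) ≤ wordProd p w →
      ∃ k, K ≤ k ∧ k ≤ n ∧ ∀ j : Fin (ℓ n), o (k + j) = w j)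
    (hx : x ∉ limsupCylinders ℓ o) :
    ∃ᶠ m : ℕ in atTop, wordProd p (fun j : Fin m => x j) * Real.exp (β * m) < 1 := by
  obtain ⟨K, hK⟩ := (notMem_limsup_iff x o).1 hx
  intro hcon
  obtain ⟨n, h1, h2⟩ := ((ho K).and_eventually (hlim.eventually hcon)).exists
  obtain ⟨k, hk1, hk2, hk3⟩ := h1 (fun j => x j) (by
    have h3 := not_lt.1 h2
    rw [neg_mul, Real.exp_neg, inv_le_iff_one_le_mul₀ (Real.exp_pos _)]
    exact h3)
  exact hK k hk1 fun j => (hk3 ⟨j, j.2.trans_le (hmono hk2)⟩).symm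

/-- Borel–Cantelli: a sequence whose prefixes are eventually light is almost surely
uncovered. -/
lemma Bern.ae_notMem (h : Bern p μ) (hα : 0 < α)
    (hℓ : Filter.liminf (fun n : ℕ => (ℓ n : ℝ) / Real.log n) atTop = 1 / α)
    {β : ℝ} (hβ : α < β) {x : ℕ → Fin N}
    (hx : ∀ᶠ m : ℕ in atTop, wordProd p (fun j : Fin m => x j) ≤ Real.exp (-β * m)) :
    ∀ᵐ o ∂μ, x ∉ limsupCylinders ℓ o := by
  obtain ⟨c, hc1, hc2⟩ := exists_between (one_div_lt_one_div_of_lt hα hβ)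
  have hβ0 : 0 < β := hα.trans hβ
  have hβc : 1 < β * c := by
    rw [div_lt_iff₀ hβ0] at hc1; linarith
  have hev : ∀ᶠ n : ℕ in atTop,
      ‖wordProd p (fun j : Fin (ℓ n) => x j)‖ ≤ 1 / (n : ℝ) ^ (β * c) := by
    filter_upwards [(tendsto_of_liminf hα hℓ).eventually hx, eventually_mul_log_lt hℓ hc2,
      eventually_gt_atTop 0] with n h1 h2 h3
    have h3 : (0 : ℝ) < n := by exact_mod_cast h3
    rw [Real.norm_of_nonneg (h.weight_pos _).le]
    refine h1.trans ?_
    rw [Real.rpow_def_of_pos h3, one_div, ← Real.exp_neg, Real.exp_le_exp]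
    nlinarith
  have hsum : Summable fun n => wordProd p (fun j : Fin (ℓ n) => x j) :=
    Summable.of_norm_bounded_eventually_nat (Real.summable_one_div_nat_rpow.2 hβc) hev
  have hbc := ae_eventually_notMem (μ := μ)
    (s := fun n => {o : ℕ → Fin N | ∀ j : Fin (ℓ n), o (n + j) = x j}) (by
      simp only [h.window (fun j : Fin (ℓ _) => x j)]
      exact hsum.tsum_ofReal_ne_top)
  filter_upwards [hbc] with o ho
  rw [notMem_limsup_iff]
  obtain ⟨K, hK⟩ := eventually_atTop.1 ho
  exact ⟨K, fun n hn hj => hK n hn fun j => (hj j).symm⟩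

end covering

end CoverSet

namespace CoverSet

/-! ### The pressure function and its Gibbs weights -/

section pressure

variable {N : ℕ} {lam a b : Fin N → ℝ}

/-- The exponential sum `∑ b_i e^{q a_i}`. -/
def expSum (b a : Fin N → ℝ) (q : ℝ) : ℝ := ∑ i, b i * Real.exp (q * a i)

lemma hasDerivAt_expSum (b a : Fin N → ℝ) (q : ℝ) :
    HasDerivAt (expSum b a) (∑ i, b i * Real.exp (q * a i) * a i) q := by
  unfold expSum
  refine HasDerivAt.fun_sum fun i _ => ?_
  have h := (((hasDerivAt_id q).mul_const (a i)).exp).const_mul (b i)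
  simp only [id, one_mul] at h
  rw [mul_assoc]
  exact h

/-- A differentiable function with positive derivative is smaller immediately to the left. -/
lemma exists_lt_left {g : ℝ → ℝ} {D x : ℝ} (h : HasDerivAt g D x) (hD : 0 < D) :
    ∃ y < x, g y < g x := by
  have h1 : Tendsto (slope g x) (𝓝[<] x) (𝓝 D) :=
    h.tendsto_slope.mono_left (nhdsWithin_mono _ fun y hy => ne_of_lt hy)
  obtain ⟨y, hy, hyx⟩ := ((h1.eventually (lt_mem_nhds hD)).and self_mem_nhdsWithin).exists
  have hyx : y < x := hyx
  refine ⟨y, hyx, ?_⟩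
  rw [slope_def_field] at hy
  by_contra hcon
  exact absurd hy (not_lt.2 (div_nonpos_of_nonneg_of_nonpos (by linarith) (by linarith)))

/-- The exponential sum attains its minimum over `q ≤ 0`, and there the first order conditions
hold. -/
lemma exists_minimizer (hb : ∀ i, 0 < b i) (i0 : Fin N) (hi0 : a i0 < 0) :
    ∃ q ≤ 0, (∑ i, b i * Real.exp (q * a i) * a i) ≤ 0 ∧
      q * (∑ i, b i * Real.exp (q * a i) * a i) = 0 := by
  have hcont : Continuous (expSum b a) := by unfold expSum; fun_prop
  have hlow : ∀ q, b i0 * Real.exp (q * a i0) ≤ expSum b a q := fun q =>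
    Finset.single_le_sum (f := fun i => b i * Real.exp (q * a i))
      (fun i _ => (mul_pos (hb i) (Real.exp_pos _)).le) (Finset.mem_univ i0)
  have hcoer : Tendsto (expSum b a) atBot atTop := by
    refine tendsto_atTop_mono hlow ?_
    refine Tendsto.const_mul_atTop (hb i0) (Real.tendsto_exp_atTop.comp ?_)
    exact tendsto_id.atBot_mul_const_of_neg hi0
  obtain ⟨M, hM⟩ := eventually_atBot.1 (hcoer.eventually_ge_atTop (expSum b a 0))
  obtain ⟨q, hq, hmin⟩ := (isCompact_Icc (a := min M 0) (b := 0)).exists_isMinOn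
    ⟨0, min_le_right _ _, le_rfl⟩ hcont.continuousOn
  have hall : ∀ y ≤ 0, expSum b a q ≤ expSum b a y := by
    intro y hy
    rcases le_total (min M 0) y with h | h
    · exact hmin ⟨h, hy⟩
    · exact (hmin (a := 0) ⟨min_le_right _ _, le_rfl⟩).trans (hM y (h.trans (min_le_left _ _)))
  have hder := hasDerivAt_expSum b a q
  refine ⟨q, hq.2, ?_, ?_⟩
  · by_contra hcon
    obtain ⟨y, hy, hlt⟩ := exists_lt_left hder (not_le.1 hcon)
    exact absurd (hall y (hy.le.trans hq.2)) (not_le.2 hlt)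
  · rcases hq.2.eq_or_lt with h | h
    · rw [h, zero_mul]
    · have hloc : IsLocalMin (expSum b a) q := by
        filter_upwards [Iio_mem_nhds h] with y hy using hall y (le_of_lt hy)
      rw [hloc.hasDerivAt_eq_zero hder, mul_zero]

/-- If `∑ λ_i^t e^{q a_i} > 1` for all `q ≤ 0`, then there is a probability vector with negative
`a`-average whose entropy exceeds `t` times its Lyapunov exponent: perturb the Gibbs weights at
the minimizing `q` towards the symbol `i0`. -/
lemma exists_weights (hlam : ∀ i, lam i ∈ Set.Ioo (0 : ℝ) 1) (i0 : Fin N) (hi0 : a i0 < 0) {t : ℝ}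
    (hG : ∀ q ≤ 0, 1 < expSum (fun i => lam i ^ t) a q) :
    ∃ r : Fin N → ℝ, (∀ i, 0 < r i) ∧ ∑ i, r i = 1 ∧ ∑ i, r i * a i < 0 ∧
      ∑ i, r i * (Real.log (r i) - t * Real.log (lam i)) < 0 := by
  classical
  have hb : ∀ i, 0 < lam i ^ t := fun i => Real.rpow_pos_of_pos (hlam i).1 t
  obtain ⟨q, hq, hD1, hD2⟩ := exists_minimizer hb i0 hi0
  set Z := expSum (fun i => lam i ^ t) a q with hZ
  have hZ1 : 1 < Z := hG q hq
  have hZ0 : 0 < Z := by linarith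
  set ν : Fin N → ℝ := fun i => lam i ^ t * Real.exp (q * a i) / Z with hν
  have hνpos : ∀ i, 0 < ν i := fun i => div_pos (mul_pos (hb i) (Real.exp_pos _)) hZ0
  have hνsum : ∑ i, ν i = 1 := by
    simp only [hν]
    rw [← Finset.sum_div]
    exact div_self hZ0.ne'
  have hνa : ∑ i, ν i * a i = (∑ i, lam i ^ t * Real.exp (q * a i) * a i) / Z := by
    rw [Finset.sum_div]
    exact Finset.sum_congr rfl fun i _ => by simp only [hν]; ring
  have hνle : ∑ i, ν i * a i ≤ 0 := by
    rw [hνa]; exact div_nonpos_of_nonpos_of_nonneg hD1 hZ0.le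
  have hlogν : ∀ i, Real.log (ν i) - t * Real.log (lam i) = q * a i - Real.log Z := fun i => by
    simp only [hν]
    rw [Real.log_div (mul_pos (hb i) (Real.exp_pos _)).ne' hZ0.ne',
      Real.log_mul (hb i).ne' (Real.exp_pos _).ne', Real.log_exp, Real.log_rpow (hlam i).1]
    ring
  have hent : ∑ i, ν i * (Real.log (ν i) - t * Real.log (lam i)) < 0 := by
    have e : ∑ i, ν i * (Real.log (ν i) - t * Real.log (lam i))
        = q * (∑ i, ν i * a i) - Real.log Z := by
      simp only [hlogν, mul_sub, Finset.sum_sub_distrib, ← Finset.sum_mul, hνsum, Finset.mul_sum,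
        one_mul]
      congr 1
      exact Finset.sum_congr rfl fun i _ => by ring
    rw [e, hνa, ← mul_div_assoc, hD2, zero_div]
    linarith [Real.log_pos hZ1]
  set R : ℝ → Fin N → ℝ := fun η i => (1 - η) * ν i + η * (if i = i0 then 1 else 0) with hR
  have hR0 : ∀ i, R 0 i = ν i := fun i => by simp [hR]
  have hRc : ∀ i, Continuous fun η => R η i := fun i => by simp only [hR]; fun_prop
  have hcont : ContinuousAt
      (fun η => ∑ i, R η i * (Real.log (R η i) - t * Real.log (lam i))) 0 := by
    refine tendsto_finsetSum _ fun i _ => ?_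
    exact (hRc i).continuousAt.mul
      (((hRc i).continuousAt.log (by rw [hR0]; exact (hνpos i).ne')).sub continuousAt_const)
  have hev : ∀ᶠ η in 𝓝[>] (0 : ℝ),
      ∑ i, R η i * (Real.log (R η i) - t * Real.log (lam i)) < 0 := by
    refine (hcont.eventually (gt_mem_nhds ?_)).filter_mono nhdsWithin_le_nhds
    simpa only [hR0] using hent
  obtain ⟨η, h1, h2, h3⟩ := (hev.and (eventually_mem_nhdsWithin.and
    ((gt_mem_nhds (zero_lt_one (α := ℝ))).filter_mono nhdsWithin_le_nhds))).exists
  have h2 : 0 < η := h2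
  refine ⟨R η, fun i => ?_, ?_, ?_, h1⟩
  · have : 0 < (1 - η) * ν i := mul_pos (by linarith) (hνpos i)
    simp only [hR]
    split_ifs <;> linarith
  · simp only [hR]
    rw [Finset.sum_add_distrib, ← Finset.mul_sum, ← Finset.mul_sum, hνsum]
    simp
  · have e : ∑ i, R η i * a i = (1 - η) * (∑ i, ν i * a i) + η * a i0 := by
      simp only [hR, add_mul, Finset.sum_add_distrib, Finset.mul_sum, mul_assoc]
      simp
    rw [e]
    nlinarith

/-- The exponential sum is strictly decreasing in the exponent of the contraction ratios. -/
lemma expSum_rpow_lt [NeZero N] (hlam : ∀ i, lam i ∈ Set.Ioo (0 : ℝ) 1) {s t : ℝ} (hst : s < t)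
    (q : ℝ) : expSum (fun i => lam i ^ t) a q < expSum (fun i => lam i ^ s) a q := by
  refine Finset.sum_lt_sum_of_nonempty Finset.univ_nonempty fun i _ => ?_
  exact mul_lt_mul_of_pos_right (Real.rpow_lt_rpow_of_exponent_gt (hlam i).1 (hlam i).2 hst)
    (Real.exp_pos _)

variable {P : ℝ → ℝ}

lemma pressure_pos (hlam : ∀ i, lam i ∈ Set.Ioo (0 : ℝ) 1) (i0 : Fin N) (hi0 : a i0 < 0)
    (hP : ∀ q, expSum (fun i => lam i ^ P q) a q = 1) {q : ℝ} (hq : q < 0) : 0 < P q := by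
  by_contra hcon
  have h1 : 1 ≤ lam i0 ^ P q :=
    Real.one_le_rpow_of_pos_of_le_one_of_nonpos (hlam i0).1 (hlam i0).2.le (not_lt.1 hcon)
  have h2 : 1 < Real.exp (q * a i0) := Real.one_lt_exp_iff.2 (mul_pos_of_neg_of_neg hq hi0)
  have h3 : lam i0 ^ P q * Real.exp (q * a i0) ≤ expSum (fun i => lam i ^ P q) a q :=
    Finset.single_le_sum (f := fun i => lam i ^ P q * Real.exp (q * a i))
      (fun i _ => (mul_pos (Real.rpow_pos_of_pos (hlam i).1 _) (Real.exp_pos _)).le)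
      (Finset.mem_univ i0)
  rw [hP] at h3
  nlinarith

lemma pressure_bddBelow (hlam : ∀ i, lam i ∈ Set.Ioo (0 : ℝ) 1) (i0 : Fin N) (hi0 : a i0 < 0)
    (hP : ∀ q, expSum (fun i => lam i ^ P q) a q = 1) : BddBelow (P '' Set.Iio 0) :=
  ⟨0, by rintro _ ⟨q, hq, rfl⟩; exact (pressure_pos hlam i0 hi0 hP hq).le⟩

/-- The infimum of the pressure is smaller than `s0`, since `∑ λ_i^{s0} e^{q a_i}` has positive
derivative at `q = 0`, where it equals `1`. -/
lemma sInf_pressure_lt [NeZero N] (hlam : ∀ i, lam i ∈ Set.Ioo (0 : ℝ) 1) (i0 : Fin N)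
    (hi0 : a i0 < 0) (hP : ∀ q, expSum (fun i => lam i ^ P q) a q = 1) {s0 : ℝ}
    (hs0 : ∑ i, lam i ^ s0 = 1) (hD : 0 < ∑ i, lam i ^ s0 * a i) :
    sInf (P '' Set.Iio 0) < s0 := by
  obtain ⟨q, hq, hlt⟩ := exists_lt_left (hasDerivAt_expSum (fun i => lam i ^ s0) a 0)
    (by simpa using hD)
  have h1 : expSum (fun i => lam i ^ s0) a 0 = 1 := by simp [expSum, hs0]
  rw [h1] at hlt
  refine (csInf_le (pressure_bddBelow hlam i0 hi0 hP) ⟨q, hq, rfl⟩).trans_lt ?_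
  by_contra hcon
  rcases (not_lt.1 hcon).eq_or_lt with h | h
  · rw [h, hP] at hlt; exact lt_irrefl _ hlt
  · have := expSum_rpow_lt (a := a) hlam h q
    rw [hP] at this
    linarith

/-- Below the infimum of the pressure the exponential sums exceed `1`. -/
lemma one_lt_expSum [NeZero N] (hlam : ∀ i, lam i ∈ Set.Ioo (0 : ℝ) 1) (i0 : Fin N)
    (hi0 : a i0 < 0) (hP : ∀ q, expSum (fun i => lam i ^ P q) a q = 1) {s0 t : ℝ}
    (hs0 : ∑ i, lam i ^ s0 = 1) (ht0 : t < s0) (ht : t < sInf (P '' Set.Iio 0)) :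
    ∀ q ≤ 0, 1 < expSum (fun i => lam i ^ t) a q := by
  intro q hq
  rcases hq.eq_or_lt with rfl | hq
  · have := expSum_rpow_lt (a := a) hlam ht0 0
    have h1 : expSum (fun i => lam i ^ s0) a 0 = 1 := by simp [expSum, hs0]
    linarith
  · have h1 : t < P q := ht.trans_le (csInf_le (pressure_bddBelow hlam i0 hi0 hP) ⟨q, hq, rfl⟩)
    have := expSum_rpow_lt (a := a) hlam h1 q
    rwa [hP] at this

end pressure

end CoverSet

namespace CoverSet

/-! ### The two dimension bounds -/

section main

variable {N d : ℕ} {lam p : Fin N → ℝ}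
    {f : Fin N → EuclideanSpace ℝ (Fin d) → EuclideanSpace ℝ (Fin d)}
    {Λ U : Set (EuclideanSpace ℝ (Fin d))}
    {π : (ℕ → Fin N) → EuclideanSpace ℝ (Fin d)}
    {μ : Measure (ℕ → Fin N)} {ℓ : ℕ → ℕ} {α : ℝ}

lemma rpow_eq_exp (hp : ∀ i, 0 < p i) (β q : ℝ) (i : Fin N) :
    (p i * Real.exp β) ^ q = Real.exp (q * (Real.log (p i) + β)) := by
  rw [Real.rpow_def_of_pos (mul_pos (hp i) (Real.exp_pos _)),
    Real.log_mul (hp i).ne' (Real.exp_pos _).ne', Real.log_exp, mul_comm]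

lemma log_wordProd (hp : ∀ i, 0 < p i) (x : ℕ → Fin N) (m : ℕ) :
    Real.log (wordProd p fun j : Fin m => x j) = ∑ j ∈ Finset.range m, Real.log (p (x j)) := by
  rw [wordProd, Real.log_prod fun j _ => (hp _).ne', Finset.sum_range]

/-- Upper bound: the uncovered set is null for `μH[s]` as soon as the pressure sum with
parameter `s` drops below `1` for some `q < 0`. -/
lemma ae_hausdorff_zero (h : OSC lam f Λ U π) (hB : Bern p μ) (hα : 0 < α)
    (hmono : Monotone ℓ)
    (hℓ : Filter.liminf (fun n : ℕ => (ℓ n : ℝ) / Real.log n) atTop = 1 / α)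
    {s q : ℝ} (hs : 0 < s) (hq : q < 0)
    (hlt : expSum (fun i => lam i ^ s) (fun i => Real.log (p i) + α) q < 1) :
    ∀ᵐ o ∂μ, μH[s] (Λ \ π '' limsupCylinders ℓ o) = 0 := by
  have hcont : Continuous fun β => ∑ i, lam i ^ s * Real.exp (q * (Real.log (p i) + β)) := by
    fun_prop
  obtain ⟨β, h1, h2, h3⟩ := (((hcont.tendsto α).eventually (gt_mem_nhds hlt)).filter_mono
    (nhdsWithin_le_nhds (s := Iio α)) |>.and (eventually_mem_nhdsWithin.and
      ((lt_mem_nhds hα).filter_mono nhdsWithin_le_nhds))).exists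
  filter_upwards [hB.ae_hits hα hℓ h3 h2] with o ho
  have hz := h.hausdorff_zero hB.pos hs hq.le (β := β)
    (by simpa only [rpow_eq_exp hB.pos] using h1) (limsupCylinders ℓ o)ᶜ
    fun x hx => frequently_light hmono (tendsto_of_liminf hα hℓ) ho hx
  refine measure_mono_null ?_ hz
  rintro y ⟨hy1, hy2⟩
  obtain ⟨x, rfl⟩ := h.subset_range hy1
  exact ⟨x, fun hx => hy2 ⟨x, hx, rfl⟩, rfl⟩

lemma Bern.cylinder_measure {r : Fin N → ℝ} {ν : Measure (ℕ → Fin N)} (hν : Bern r ν)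
    (x : ℕ → Fin N) (m : ℕ) :
    ν {y | pre y m = pre x m} = ENNReal.ofReal (wordProd r fun j : Fin m => x j) := by
  rw [← hν.cyl (fun j : Fin m => x j) x fun j => rfl]
  congr 1
  ext y
  simp only [mem_ofPred_eq, pre_eq_iff, _root_.cylinder]
  exact ⟨fun hy j => hy j j.2, fun hy j hj => hy ⟨j, hj⟩⟩

/-- Lower bound: if the pressure sums with parameter `t` exceed `1` for all `q ≤ 0`, then the
uncovered set has dimension at least `t`, because it carries a Bernoulli measure with entropy
larger than `t` times its Lyapunov exponent. -/
lemma ae_le_dimH [NeZero N] (h : OSC lam f Λ U π) (hB : Bern p μ) (hα : 0 < α)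
    (hℓ : Filter.liminf (fun n : ℕ => (ℓ n : ℝ) / Real.log n) atTop = 1 / α)
    {t : ℝ} (ht : 0 < t) (i0 : Fin N) (hi0 : Real.log (p i0) + α < 0)
    (hG : ∀ q ≤ 0, 1 < expSum (fun i => lam i ^ t) (fun i => Real.log (p i) + α) q) :
    ∀ᵐ o ∂μ, ENNReal.ofReal t ≤ dimH (Λ \ π '' limsupCylinders ℓ o) := by
  obtain ⟨r, hr0, hr1, hra, hrent⟩ := exists_weights h.lam_mem i0 hi0 hG
  obtain ⟨ν, hν⟩ := bern_exists hr0 hr1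
  have := hν.prob
  have := hB.prob
  obtain ⟨l, hl, a, ha⟩ := h.exists_unique_coding
  have hra' : ∑ i, r i * Real.log (p i) < -α := by
    have : ∑ i, r i * (Real.log (p i) + α) = ∑ i, r i * Real.log (p i) + α := by
      simp only [mul_add, Finset.sum_add_distrib, ← Finset.sum_mul, hr1, one_mul]
    linarith
  obtain ⟨β', hβ1, hβ2⟩ := exists_between hra'
  have hlight : ∀ᵐ x ∂ν, ∀ᵐ o ∂μ, x ∉ limsupCylinders ℓ o := by
    filter_upwards [hν.slln fun i => Real.log (p i)] with x hx
    refine hB.ae_notMem hα hℓ (β := -β') (by linarith) ?_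
    filter_upwards [hx.eventually (gt_mem_nhds hβ1), eventually_gt_atTop 0] with m h1 h2
    have h2 : (0 : ℝ) < m := by exact_mod_cast h2
    rw [← log_wordProd hB.pos, div_lt_iff₀ h2] at h1
    rw [← Real.log_le_iff_le_exp (hB.weight_pos _), neg_neg]
    exact h1.le
  have hae := (Measure.ae_ae_comm (μ := ν) (ν := μ)
    (p := fun x o => x ∉ limsupCylinders ℓ o)
    (measurable_swap measurableSet_limsup.compl)).1 hlight
  have hent : ∀ᵐ x ∂ν, ∃ n0, ∀ m ≥ n0,
      ν {y | pre y m = pre x m} ≤ ENNReal.ofReal (lp lam (pre x m) ^ t) := by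
    filter_upwards [hν.slln fun i => Real.log (r i) - t * Real.log (lam i)] with x hx
    refine eventually_atTop.1 ?_
    filter_upwards [hx.eventually (gt_mem_nhds hrent), eventually_gt_atTop 0] with m h1 h2
    have h2 : (0 : ℝ) < m := by exact_mod_cast h2
    rw [div_lt_iff₀ h2, zero_mul, Finset.sum_sub_distrib, ← Finset.mul_sum,
      ← log_wordProd hr0, ← log_wordProd fun i => (h.lam_mem i).1] at h1
    rw [hν.cylinder_measure]
    refine ENNReal.ofReal_le_ofReal ?_
    have hpos : 0 < lp lam (pre x m) := h.lp_pos _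
    rw [pre, lp_ofFn] at hpos ⊢
    rw [← Real.log_le_log_iff (hν.weight_pos _) (Real.rpow_pos_of_pos hpos _),
      Real.log_rpow hpos]
    linarith
  filter_upwards [hae] with o ho
  set A : ℕ → Set (ℕ → Fin N) := fun n0 => {x | x ∉ limsupCylinders ℓ o ∧
    (∀ K, ∃ n ≥ K, ∀ j : Fin l, x (n + j) = a j) ∧
    ∀ m ≥ n0, ν {y | pre y m = pre x m} ≤ ENNReal.ofReal (lp lam (pre x m) ^ t)} with hA
  obtain ⟨n0, hn0⟩ : ∃ n0, ν (A n0) ≠ 0 := by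
    by_contra hcon
    push Not at hcon
    have h1 : ∀ᵐ x ∂ν, x ∉ ⋃ n, A n := measure_eq_zero_iff_ae_notMem.1 (measure_iUnion_null hcon)
    obtain ⟨x, hx1, hx2, hx3, n0, hx4⟩ :=
      (h1.and (ho.and ((hν.infinitely_often hl a).and hent))).exists
    exact hx1 (mem_iUnion.2 ⟨n0, hx2, hx3, hx4⟩)
  refine (h.le_dimH hn0 ht n0 fun x hx => hx.2.2).trans (dimH_mono ?_)
  rintro _ ⟨x, ⟨hx1, hx2, -⟩, rfl⟩
  refine ⟨h.π_mem x, ?_⟩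
  rintro ⟨y, hy, hxy⟩
  exact hx1 (ha x y hx2 hxy.symm ▸ hy)

end main

end CoverSet

/-- In the region `−Σ λ_i^(s₀) log p_i < α < −log p_min`: a.s.
`dim_H(Λ ∖ R(ō,ℓ)) = inf_(q<0) P_α(q) < s₀` and `R(ō,ℓ)` has full `s₀`-Hausdorff
measure. -/
theorem coverSet_full_measure_region {N d : ℕ} [NeZero N] (hN : 2 ≤ N)
    (lam p : Fin N → ℝ)
    (hlam : ∀ i, lam i ∈ Set.Ioo (0 : ℝ) 1)
    (hp : ∀ i, 0 < p i) (hpsum : ∑ i, p i = 1)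
    (f : Fin N → EuclideanSpace ℝ (Fin d) → EuclideanSpace ℝ (Fin d))
    (hf : ∀ i x y, dist (f i x) (f i y) = lam i * dist x y)
    (Λ : Set (EuclideanSpace ℝ (Fin d)))
    (hΛne : Λ.Nonempty) (hΛc : IsCompact Λ) (hΛ : Λ = ⋃ i, f i '' Λ)
    (U : Set (EuclideanSpace ℝ (Fin d)))
    (hUne : U.Nonempty) (hUo : IsOpen U) (hUb : Bornology.IsBounded U)
    (hUsub : ∀ i, f i '' U ⊆ U)
    (hUdisj : Pairwise fun i j => Disjoint (f i '' U) (f j '' U))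
    (π : (ℕ → Fin N) → EuclideanSpace ℝ (Fin d))
    (hπ : ∀ x, Filter.Tendsto (fun n => prefixMap f x n 0) Filter.atTop (nhds (π x)))
    (μ : Measure (ℕ → Fin N)) [IsProbabilityMeasure μ]
    (hμ : ∀ (m : ℕ) (w : Fin m → Fin N), μ (cylinder w) = ENNReal.ofReal (wordProd p w))
    (α : ℝ) (hα : 0 < α)
    (ℓ : ℕ → ℕ) (hℓmono : Monotone ℓ)
    (hℓ : Filter.liminf (fun n : ℕ => (ℓ n : ℝ) / Real.log n) Filter.atTop = 1 / α)
    (P : ℝ → ℝ)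
    (hP : ∀ q : ℝ, ∑ i, lam i ^ P q * (p i * Real.exp α) ^ q = 1)
    (s0 : ℝ) (hs0 : ∑ i, lam i ^ s0 = 1)
    (hαgt : -∑ i, lam i ^ s0 * Real.log (p i) < α)
    (hαlt : α < -Real.log (⨅ i, p i)) :
    ∀ᵐ o ∂μ,
      dimH (Λ \ π '' limsupCylinders ℓ o) = ENNReal.ofReal (sInf (P '' Set.Iio 0)) ∧
      sInf (P '' Set.Iio 0) < s0 ∧
      μH[s0] (π '' limsupCylinders ℓ o) = μH[s0] Λ := by
  have h : CoverSet.OSC lam f Λ U π :=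
    ⟨hlam, hf, hΛne, hΛc, hΛ, hUne, hUo, hUb, hUsub, hUdisj, hπ⟩
  have hB : CoverSet.Bern p μ := CoverSet.bern_of_cylinder hp hpsum hμ
  set a : Fin N → ℝ := fun i => Real.log (p i) + α with ha
  set S := sInf (P '' Set.Iio 0) with hS
  have hP' : ∀ q, CoverSet.expSum (fun i => lam i ^ P q) a q = 1 := fun q => by
    rw [← hP q]
    exact Finset.sum_congr rfl fun i _ => by rw [CoverSet.rpow_eq_exp hp]
  obtain ⟨i0, hi0⟩ := exists_eq_ciInf_of_finite (f := p)
  have hi0 : a i0 < 0 := by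
    simp only [ha]
    rw [hi0]; linarith
  have hD : 0 < ∑ i, lam i ^ s0 * a i := by
    have : ∑ i, lam i ^ s0 * a i = ∑ i, lam i ^ s0 * Real.log (p i) + α := by
      simp only [ha, mul_add, Finset.sum_add_distrib, ← Finset.sum_mul, hs0, one_mul]
    linarith
  have hSs0 : S < s0 := CoverSet.sInf_pressure_lt hlam i0 hi0 hP' hs0 hD
  have hbdd := CoverSet.pressure_bddBelow hlam i0 hi0 hP'
  have hne : (P '' Set.Iio 0).Nonempty := ⟨_, -1, by simp, rfl⟩
  have hS0 : 0 ≤ S := le_csInf hne (by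
    rintro _ ⟨q, hq, rfl⟩
    exact (CoverSet.pressure_pos hlam i0 hi0 hP' hq).le)
  -- rational exponents keep the exceptional null sets countable in number
  have hup : ∀ᵐ o ∂μ, ∀ s : ℚ, S < s → μH[(s : ℝ)] (Λ \ π '' limsupCylinders ℓ o) = 0 := by
    rw [ae_all_iff]
    intro s
    rw [Filter.eventually_imp_distrib_left]
    intro hs
    obtain ⟨_, ⟨q, hq, rfl⟩, hqs⟩ := exists_lt_of_csInf_lt hne hs
    refine CoverSet.ae_hausdorff_zero h hB hα hℓmono hℓ (hS0.trans_lt hs) hq ?_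
    have := CoverSet.expSum_rpow_lt (a := a) hlam hqs q
    rwa [hP'] at this
  have hlow : ∀ᵐ o ∂μ, ∀ t : ℚ, 0 < t → (t : ℝ) < S →
      ENNReal.ofReal t ≤ dimH (Λ \ π '' limsupCylinders ℓ o) := by
    rw [ae_all_iff]
    intro t
    rw [Filter.eventually_imp_distrib_left]
    intro ht
    rw [Filter.eventually_imp_distrib_left]
    intro htS
    exact CoverSet.ae_le_dimH h hB hα hℓ (by exact_mod_cast ht) i0 hi0
      (CoverSet.one_lt_expSum hlam i0 hi0 hP' hs0 (htS.trans hSs0) htS)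
  filter_upwards [hup, hlow] with o ho1 ho2
  have hdim : dimH (Λ \ π '' limsupCylinders ℓ o) = ENNReal.ofReal S := by
    refine le_antisymm (le_of_forall_gt fun c hc => ?_) (le_of_forall_lt fun c hc => ?_)
    · obtain ⟨s, hs0', hs1, hs2⟩ := ENNReal.lt_iff_exists_rat_btwn.1 hc
      have hs3 : S < s := by
        have := (ENNReal.coe_lt_coe.1 (hs1 : ((S.toNNReal : NNReal) : ℝ≥0∞) < _))
        exact (Real.toNNReal_lt_toNNReal_iff_of_nonneg hS0).1 this
      refine lt_of_le_of_lt (dimH_le_of_hausdorffMeasure_ne_top ?_) hs2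
      rw [Real.coe_toNNReal _ (hS0.trans hs3.le), ho1 s hs3]
      exact ENNReal.zero_ne_top
    · obtain ⟨t, ht0, ht1, ht2⟩ := ENNReal.lt_iff_exists_rat_btwn.1 hc
      have ht3 : (t : ℝ) < S := by
        have := (ENNReal.coe_lt_coe.1 (ht2 : _ < ((S.toNNReal : NNReal) : ℝ≥0∞)))
        exact (Real.toNNReal_lt_toNNReal_iff_of_nonneg (by exact_mod_cast ht0)).1 this
      have ht4 : 0 < t := by
        rcases ht0.eq_or_lt with rfl | h'
        · simp at ht1
        · exact h'
      exact ht1.trans_le (ho2 t ht4 ht3)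
  refine ⟨hdim, hSs0, ?_⟩
  have hs0pos : 0 ≤ s0 := hS0.trans hSs0.le
  have hnull : μH[s0] (Λ \ π '' limsupCylinders ℓ o) = 0 := by
    have := hausdorffMeasure_of_dimH_lt (s := Λ \ π '' limsupCylinders ℓ o) (d := s0.toNNReal)
      (by rw [hdim]; exact (ENNReal.ofReal_lt_ofReal_iff (hS0.trans_lt hSs0)).2 hSs0)
    rwa [Real.coe_toNNReal _ hs0pos] at this
  have hsub : π '' limsupCylinders ℓ o ⊆ Λ := by
    rintro _ ⟨x, -, rfl⟩
    exact h.π_mem x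
  refine le_antisymm (measure_mono hsub) ?_
  calc μH[s0] Λ ≤ μH[s0] (π '' limsupCylinders ℓ o ∪ (Λ \ π '' limsupCylinders ℓ o)) :=
        measure_mono (by rw [union_sdiff_self]; exact subset_union_right)
    _ ≤ _ := measure_union_le _ _
    _ = _ := by rw [hnull, add_zero]
end
end

section
/- Let Φ = {f_1,…,f_N} be an iterated function system of contracting similarities on ℝ^d with attractor Λ, let p be a probability vector with all p_i > 0, let 0 < α < −Σ_{i=1}^N λ_i^{s₀} log p_i, and let ℓ : ℕ → ℕ be monotone increasing with liminf_{n→∞} ℓ(n)/log n = 1/α. Let (q_1,…,q_N) be a probability vector with Σ_{i=1}^N q_i log p_i + α > 0, and let ν be the push-forward under π of the Bernoulli product measure on Σ with marginal (q_1,…,q_N). Then ν(Λ ∖ R(ō,ℓ)) = 0 for ℙ_p-almost every ō ∈ Σ. -/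
/-!
The statement reduces to the symbolic space: it suffices that `νq`-almost every sequence `x` lies
in the symbolic limsup set of `o` for `μ`-almost every `o`, since the exceptional set is contained
in the preimage of the complement. The relation `x ∈ limsupCylinders ℓ o` is jointly measurable, so
by Fubini the two quantifiers may be exchanged, and `x` may be fixed first.

By the strong law of large numbers (`ae_tendsto_log`), for `νq`-almost every `x` the mass
`p_{x|m}` is at least `exp (-b m)` for all large `m`, for some `b` with `0 < b < α`. The condition on the
`liminf` gives infinitely many `n` with `ℓ(n) < c log n`, where `b c < 1`. For such `n`, with
`L = ℓ(n)`, one has `p_{x|L} n / L ≥ n ^ (1 - b c) / (c log n)`, which is arbitrarily large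
(`exists_large`). Splitting `[K, n]` into about `n / L` disjoint blocks of length `L`, a
`μ`-random `o` avoids the word `x|L` in all of them with probability
`(1 - p_{x|L}) ^ M ≤ exp (-p_{x|L} M)` (`measure_no_match`), which is arbitrarily small.
A match at time `m ≤ n` puts `x` in the cylinder of length `ℓ(m) ≤ ℓ(n)` by monotonicity of `ℓ`.
So almost surely `x` is covered at some time after `K`, for every `K` (`ae_mem_limsupCylinders`).
-/

open MeasureTheory Filter Topology Set ENNReal

noncomputable section

/-! ### Bernoulli measures as product measures -/

/-- A measure with the cylinder masses of a Bernoulli measure is an infinite product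
measure, which gives access to independence of the coordinates. -/
lemma exists_eq_infinitePi {N : ℕ} (r : Fin N → ℝ) (hr : ∀ i, 0 ≤ r i) (hrsum : ∑ i, r i = 1)
    (μ : Measure (ℕ → Fin N))
    (hμ : ∀ (m : ℕ) (w : Fin m → Fin N),
      μ (_root_.cylinder w) = ENNReal.ofReal (wordProd r w)) :
    ∃ P : Measure (Fin N), ∃ _ : IsProbabilityMeasure P,
      (∀ i, P {i} = ENNReal.ofReal (r i)) ∧ μ = Measure.infinitePi (fun _ => P) := by
  classical
  let P : Measure (Fin N) := ∑ i, ENNReal.ofReal (r i) • Measure.dirac i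
  have hPs : ∀ i, P {i} = ENNReal.ofReal (r i) := by
    intro i
    simp only [P, Measure.finsetSum_apply, Measure.smul_apply, smul_eq_mul]
    rw [Finset.sum_eq_single i]
    · simp
    · intro j _ hj
      simp [hj]
    · simp
  have hP : IsProbabilityMeasure P := by
    constructor
    simp only [P, Measure.finsetSum_apply, Measure.smul_apply, smul_eq_mul, measure_univ, mul_one]
    rw [← ENNReal.ofReal_sum_of_nonneg (fun i _ => hr i), hrsum, ENNReal.ofReal_one]
  refine ⟨P, hP, hPs, Measure.eq_infinitePi _ fun s t _ => ?_⟩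
  obtain ⟨m, hm⟩ : ∃ m, s ⊆ Finset.range m := s.exists_nat_subset_range
  -- The law of the first `m` letters is a finite product measure.
  have hres : μ.map (fun x (j : Fin m) => x (j : ℕ)) = Measure.pi (fun _ : Fin m => P) := by
    refine Measure.ext_of_singleton fun w => ?_
    rw [Measure.map_apply (by fun_prop) (measurableSet_singleton _), Measure.pi_singleton]
    have h1 : (fun (x : ℕ → Fin N) (j : Fin m) => x (j : ℕ)) ⁻¹' {w} = _root_.cylinder w := by
      ext x
      simp [_root_.cylinder, funext_iff]
    rw [h1, hμ, wordProd, ENNReal.ofReal_prod_of_nonneg (fun i _ => hr _)]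
    simp [hPs]
  let t' : ℕ → Set (Fin N) := fun i => if i ∈ s then t i else univ
  have h2 : Set.pi (s : Set ℕ) t = (fun (x : ℕ → Fin N) (j : Fin m) => x (j : ℕ)) ⁻¹'
      (Set.pi univ fun j : Fin m => t' j) := by
    ext x
    simp only [Set.mem_pi, Finset.mem_coe, mem_preimage, mem_univ, true_imp_iff, t']
    constructor
    · intro h j
      split_ifs with hj
      · exact h _ hj
      · trivial
    · intro h i hi
      have := h ⟨i, Finset.mem_range.1 (hm hi)⟩
      simpa [hi] using this
  rw [h2, ← Measure.map_apply (by fun_prop) (Set.toFinite _).measurableSet, hres, Measure.pi_pi,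
    Fin.prod_univ_eq_prod_range (fun i => P (t' i)) m]
  rw [← Finset.prod_subset hm]
  · exact Finset.prod_congr rfl fun i hi => by simp [t', hi]
  · intro i _ hi
    simp [t', hi]

/-- The strong law of large numbers for the logarithmic `p`-mass of the prefixes of a
`q`-random sequence. -/
lemma ae_tendsto_log {N : ℕ} (p q : Fin N → ℝ) (hq : ∀ i, 0 ≤ q i)
    (P : Measure (Fin N)) [IsProbabilityMeasure P] (hP : ∀ i, P {i} = ENNReal.ofReal (q i)) :
    ∀ᵐ x ∂(Measure.infinitePi (fun _ : ℕ => P)),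
      Tendsto (fun m : ℕ => (∑ j ∈ Finset.range m, Real.log (p (x j))) / (m : ℝ)) atTop
        (𝓝 (∑ i, q i * Real.log (p i))) := by
  set ν := Measure.infinitePi (fun _ : ℕ => P) with hν
  let g : Fin N → ℝ := fun i => Real.log (p i)
  have hg : Measurable g := measurable_of_finite g
  let X : ℕ → (ℕ → Fin N) → ℝ := fun j x => g (x j)
  have hmap : ∀ j, ν.map (fun x => x j) = P := fun j => Measure.infinitePi_map_eval _ j
  have hXm : ∀ j, Measurable (X j) := fun j => hg.comp (measurable_pi_apply j)
  have hPint : Integrable g P := Integrable.of_finite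
  have hint : Integrable (X 0) ν := by
    have := hPint
    rw [← hmap 0] at this
    exact this.comp_measurable (measurable_pi_apply 0)
  have hE : ∫ x, X 0 x ∂ν = ∑ i, q i * Real.log (p i) := by
    have h : ∫ x, X 0 x ∂ν = ∫ i, g i ∂(ν.map (fun x => x 0)) :=
      (integral_map (φ := fun x : ℕ → Fin N => x 0) (f := g)
        (measurable_pi_apply 0).aemeasurable hg.aestronglyMeasurable).symm
    rw [h, hmap, integral_fintype hPint]
    refine Finset.sum_congr rfl fun i _ => ?_
    simp [Measure.real, hP, ENNReal.toReal_ofReal (hq i), g]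
  have hindep : ProbabilityTheory.iIndepFun X ν :=
    ProbabilityTheory.iIndepFun_infinitePi (X := fun _ => g) (fun _ => hg)
  have hid : ∀ i, ProbabilityTheory.IdentDistrib (X i) (X 0) ν ν := by
    intro i
    refine ⟨(hXm i).aemeasurable, (hXm 0).aemeasurable, ?_⟩
    have h : ∀ j, ν.map (X j) = P.map g := fun j => by
      rw [← hmap j, Measure.map_map hg (measurable_pi_apply j)]
      rfl
    rw [h, h]
  have := ProbabilityTheory.strong_law_ae_real X hint
    (fun i j hij => hindep.indepFun hij) hid
  rw [hE] at this
  exact this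

/-! ### Avoiding a word in disjoint blocks -/

/-- The probability that a random sequence avoids a fixed word `x|_L` in each of `M`
consecutive disjoint blocks of length `L`. -/
lemma measure_no_match {N : ℕ} (P : Measure (Fin N)) [IsProbabilityMeasure P]
    (x : ℕ → Fin N) (K L M : ℕ) :
    (Measure.infinitePi (fun _ : ℕ => P)).real
      {o | ∀ i < M, ¬ ∀ j < L, o (K + i * L + j) = x j} =
      (1 - ∏ j ∈ Finset.range L, P.real {x j}) ^ M := by
  set μ := Measure.infinitePi (fun _ : ℕ => P) with hμ
  have hindep : ProbabilityTheory.iIndepFun (fun i (o : ℕ → Fin N) => o i) μ :=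
    ProbabilityTheory.iIndepFun_infinitePi (X := fun _ => id) (fun _ => measurable_id)
  induction M with
  | zero => simp
  | succ M ih =>
    set B : Set (ℕ → Fin N) := {o | ∀ i < M, ¬ ∀ j < L, o (K + i * L + j) = x j} with hB
    set C : Set (ℕ → Fin N) := {o | ∀ j < L, o (K + M * L + j) = x j} with hC
    have hCm : MeasurableSet C := by
      rw [hC]
      measurability
    have hdiff : {o : ℕ → Fin N | ∀ i < M + 1, ¬ ∀ j < L, o (K + i * L + j) = x j} = B \ C := by
      ext o
      simp only [hB, hC, Set.mem_sdiff, mem_ofPred_eq, Nat.forall_lt_succ_right]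
    let S := Finset.range (K + M * L)
    let T := Finset.Ico (K + M * L) (K + M * L + L)
    have hST : Disjoint S T := by
      rw [Finset.disjoint_left]
      intro a ha hb
      simp only [S, T, Finset.mem_range, Finset.mem_Ico] at ha hb
      omega
    have hI := hindep.indepFun_finset S T hST (fun i => measurable_pi_apply i)
    have hlt : ∀ i < M, ∀ j < L, K + i * L + j < K + M * L := by
      intro i hi j hj
      have : (i + 1) * L ≤ M * L := Nat.mul_le_mul_right L hi
      rw [add_mul, one_mul] at this
      omega
    have hBS : ∃ B' : Set (S → Fin N),
        (fun (a : ℕ → Fin N) (i : S) => a i) ⁻¹' B' = B := by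
      refine ⟨{u | ∀ i, ∀ hi : i < M, ¬ ∀ j, ∀ hj : j < L,
        u ⟨K + i * L + j, Finset.mem_range.2 (hlt i hi j hj)⟩ = x j}, ?_⟩
      rfl
    have hCT : ∃ C' : Set (T → Fin N),
        (fun (a : ℕ → Fin N) (i : T) => a i) ⁻¹' C' = C := by
      refine ⟨{u | ∀ j, ∀ hj : j < L, u ⟨K + M * L + j, Finset.mem_Ico.2 (by omega)⟩ = x j}, ?_⟩
      rfl
    obtain ⟨B', hB'⟩ := hBS
    obtain ⟨C', hC'⟩ := hCT
    have hmul := hI.measure_inter_preimage_eq_mul B' C' (Set.toFinite _).measurableSet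
      (Set.toFinite _).measurableSet
    rw [hB', hC'] at hmul
    have hCeq : C = Set.pi (T : Set ℕ) (fun k => {x (k - (K + M * L))}) := by
      ext o
      simp only [hC, T, mem_ofPred_eq, Set.mem_pi, Finset.mem_coe, Finset.mem_Ico,
        mem_singleton_iff]
      constructor
      · rintro h k ⟨h1, h2⟩
        have := h (k - (K + M * L)) (by omega)
        rwa [Nat.add_sub_cancel' h1] at this
      · intro h j hj
        have := h (K + M * L + j) (by omega)
        rwa [Nat.add_sub_cancel_left] at this
    have hCval : μ.real C = ∏ j ∈ Finset.range L, P.real {x j} := by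
      rw [Measure.real, hCeq, hμ, Measure.infinitePi_pi _ (fun _ _ => measurableSet_singleton _),
        ENNReal.toReal_prod]
      rw [Finset.prod_Ico_eq_prod_range]
      simp [Measure.real]
    have hmulr : μ.real (B ∩ C) = μ.real B * μ.real C := by
      simp only [Measure.real, hmul, ENNReal.toReal_mul]
    rw [hdiff]
    have h3 := measureReal_inter_add_sdiff (μ := μ) (s := B) hCm
    rw [hmulr, ih, hCval] at h3
    rw [pow_succ]
    linarith

/-! ### Growth of `ℓ` against the decay of prefix masses -/

/-- Since `ℝ` is only conditionally complete, `liminf` would be `0` if `u` tended to infinity;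
positivity of the `liminf` rules this out. -/
lemma frequently_lt_of_liminf_pos {u : ℕ → ℝ} {a c : ℝ} (h : liminf u atTop = a)
    (ha : 0 < a) (hac : a < c) : ∃ᶠ n in atTop, u n < c := by
  by_contra hcon
  rw [not_frequently] at hcon
  rw [liminf_eq] at h
  by_cases hb : BddAbove {b | ∀ᶠ n in atTop, b ≤ u n}
  · have := le_csSup hb (show c ∈ {b | ∀ᶠ n in atTop, b ≤ u n} by
      filter_upwards [hcon] with n hn using not_lt.1 hn)
    linarith
  · rw [Real.sSup_of_not_bddAbove hb] at h
    linarith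

/-- If the `p`-mass of the prefixes of `x` decays at rate slower than `exp (-α m)`, then
arbitrarily late there are `n` for which the expected number of matches of `x|_{ℓ(n)}` in
disjoint blocks before time `n` is large. -/
lemma exists_large {α : ℝ} (hα : 0 < α) {ℓ : ℕ → ℕ}
    (hℓ : liminf (fun n : ℕ => (ℓ n : ℝ) / Real.log n) atTop = 1 / α)
    {S : ℕ → ℝ} {a : ℝ} (haα : 0 < a + α)
    (hS : Tendsto (fun m : ℕ => S m / (m : ℝ)) atTop (𝓝 a)) (R : ℝ) (K : ℕ) :
    ∃ n, K ≤ n ∧ 0 < ℓ n ∧ R * ℓ n ≤ Real.exp (S (ℓ n)) * n := by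
  -- Choose `b` with `-a < b < α` and then `c` with `1/α < c < 1/b`.
  obtain ⟨b, hb1, hb2⟩ := exists_between (show max (-a) 0 < α from max_lt (by linarith) hα)
  have hb0 : 0 < b := (le_max_right _ _).trans_lt hb1
  have hba : -b < a := by
    have := (le_max_left (-a) 0).trans_lt hb1
    linarith
  obtain ⟨c, hc1, hc2⟩ := exists_between (one_div_lt_one_div_of_lt hb0 hb2)
  have hα' : 0 < 1 / α := by positivity
  have hc0 : 0 < c := hα'.trans hc1
  have hbc : 0 < 1 - b * c := by
    have : c * b < 1 := (lt_div_iff₀ hb0).1 hc2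
    linarith [mul_comm b c]
  have hfreq := frequently_lt_of_liminf_pos hℓ hα' hc1
  have hlogt : Tendsto (fun n : ℕ => Real.log n) atTop atTop :=
    Real.tendsto_log_atTop.comp tendsto_natCast_atTop_atTop
  have hlogpos : ∀ᶠ n : ℕ in atTop, 0 < Real.log n := hlogt.eventually_gt_atTop 0
  have hlow : ∀ᶠ n : ℕ in atTop, 1 / α / 2 < (ℓ n : ℝ) / Real.log n := by
    refine eventually_lt_of_lt_liminf (by rw [hℓ]; linarith) ?_
    exact ⟨0, eventually_map.2 (Eventually.of_forall fun n =>
      div_nonneg (Nat.cast_nonneg _) (Real.log_natCast_nonneg n))⟩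
  have hℓt : Tendsto ℓ atTop atTop := by
    rw [← tendsto_natCast_atTop_iff (R := ℝ)]
    refine tendsto_atTop_mono' _ ?_ (hlogt.const_mul_atTop (show 0 < 1 / α / 2 by positivity))
    filter_upwards [hlow, hlogpos] with n h1 h2
    exact ((lt_div_iff₀ h2).1 h1).le
  have hSb : ∀ᶠ m : ℕ in atTop, -b * m ≤ S m := by
    filter_upwards [hS.eventually (lt_mem_nhds hba), eventually_gt_atTop 0] with m hm hm0
    exact ((lt_div_iff₀ (by exact_mod_cast hm0)).1 hm).le
  have hexp : ∀ᶠ t : ℝ in atTop, |R| * c * t ≤ Real.exp ((1 - b * c) * t) := by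
    have := (isLittleO_pow_exp_pos_mul_atTop 1 hbc).bound
      (show 0 < 1 / (|R| * c + 1) by positivity)
    filter_upwards [this, eventually_ge_atTop 0] with t ht ht0
    simp only [pow_one, Real.norm_eq_abs, abs_of_nonneg ht0, Real.abs_exp] at ht
    rw [div_mul_eq_mul_div, one_mul, le_div_iff₀ (by positivity)] at ht
    linarith
  obtain ⟨n, h1, h2, h3, h4, h5, h6⟩ := (hfreq.and_eventually
    ((hℓt.eventually hSb).and (hlogpos.and ((hlogt.eventually hexp).and
      ((hℓt.eventually_gt_atTop 0).and (eventually_ge_atTop (max K 1))))))).exists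
  refine ⟨n, (le_max_left _ _).trans h6, h5, ?_⟩
  have hn : (0 : ℝ) < n := by exact_mod_cast (le_max_right K 1).trans h6
  have hL : (ℓ n : ℝ) ≤ c * Real.log n := ((div_lt_iff₀ h3).1 h1).le
  calc R * ℓ n ≤ |R| * (c * Real.log n) :=
        mul_le_mul (le_abs_self R) hL (Nat.cast_nonneg _) (abs_nonneg R)
    _ = |R| * c * Real.log n := by ring
    _ ≤ Real.exp ((1 - b * c) * Real.log n) := h4
    _ = Real.exp (-b * (c * Real.log n)) * n := by
        rw [← Real.exp_log hn, Real.log_exp, ← Real.exp_add]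
        congr 1
        ring
    _ ≤ Real.exp (S (ℓ n)) * n := by
        gcongr
        nlinarith

/-! ### Almost sure covering of a fixed sequence -/

lemma mem_limsupCylinders {N : ℕ} {ℓ : ℕ → ℕ} {o x : ℕ → Fin N} :
    x ∈ limsupCylinders ℓ o ↔ ∀ k, ∃ n, k ≤ n ∧ ∀ j < ℓ n, x j = o (n + j) := by
  simp only [limsupCylinders, _root_.cylinder, mem_iInter, mem_iUnion, mem_ofPred_eq, exists_prop,
    Fin.forall_iff]

/-- Every `x` along which `exists_large` applies is almost surely covered infinitely often:
by monotonicity of `ℓ`, one match of `x|_{ℓ(n)}` at a time between `K` and `n` suffices, and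
disjoint blocks give independent trials. -/
lemma ae_mem_limsupCylinders {N : ℕ} {p : Fin N → ℝ} (hp : ∀ i, 0 < p i)
    (P : Measure (Fin N)) [IsProbabilityMeasure P] (hP : ∀ i, P {i} = ENNReal.ofReal (p i))
    {α : ℝ} (hα : 0 < α) {ℓ : ℕ → ℕ} (hℓmono : Monotone ℓ)
    (hℓ : liminf (fun n : ℕ => (ℓ n : ℝ) / Real.log n) atTop = 1 / α)
    {a : ℝ} (haα : 0 < a + α) (x : ℕ → Fin N)
    (hx : Tendsto (fun m : ℕ => (∑ j ∈ Finset.range m, Real.log (p (x j))) / (m : ℝ)) atTop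
        (𝓝 a)) :
    ∀ᵐ o ∂(Measure.infinitePi (fun _ : ℕ => P)), x ∈ limsupCylinders ℓ o := by
  set μ := Measure.infinitePi (fun _ : ℕ => P) with hμ
  simp only [mem_limsupCylinders]
  rw [ae_all_iff]
  intro K
  rw [ae_iff, ← measureReal_eq_zero_iff]
  refine le_antisymm (le_of_forall_pos_le_add fun ε hε => ?_) measureReal_nonneg
  rw [zero_add]
  obtain ⟨n, hKn, hL, hn⟩ := exists_large hα hℓ haα hx (-Real.log ε + K + 1) K
  set L := ℓ n with hLdef
  set w := ∏ j ∈ Finset.range L, P.real {x j} with hw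
  have hPr : ∀ i, P.real {i} = p i := fun i => by
    simp [Measure.real, hP, (hp i).le]
  have hwexp : Real.exp (∑ j ∈ Finset.range L, Real.log (p (x j))) = w := by
    rw [Real.exp_sum, hw]
    exact Finset.prod_congr rfl fun j _ => by rw [Real.exp_log (hp _), hPr]
  rw [hwexp] at hn
  have hw0 : 0 ≤ w := Finset.prod_nonneg fun _ _ => measureReal_nonneg
  have hw1 : w ≤ 1 := Finset.prod_le_one (fun _ _ => measureReal_nonneg)
    fun _ _ => measureReal_le_one
  set M := (n - K) / L with hM
  have hsub : {o : ℕ → Fin N | ¬ ∃ m, K ≤ m ∧ ∀ j < ℓ m, x j = o (m + j)} ⊆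
      {o | ∀ i < M, ¬ ∀ j < L, o (K + i * L + j) = x j} := by
    intro o ho i hi hmatch
    refine ho ⟨K + i * L, Nat.le_add_right _ _, fun j hj => (hmatch j (hj.trans_le ?_)).symm⟩
    refine hℓmono ?_
    have h1 : i * L ≤ M * L := Nat.mul_le_mul_right L hi.le
    have h2 : M * L ≤ n - K := Nat.div_mul_le_self _ _
    omega
  have hML : (n : ℝ) ≤ M * L + L + K := by
    have h := Nat.lt_div_mul_add (a := n - K) hL
    have : n ≤ M * L + L + K := by
      rw [hM]
      omega
    exact_mod_cast this
  have hLr : (1 : ℝ) ≤ L := by exact_mod_cast hL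
  -- From `(R + K + 1) L ≤ w n` and `n ≤ M L + L + K` one gets `R ≤ w M`, with `R = -log ε`.
  have hwM : -Real.log ε ≤ w * M := by
    have h1 : w * n ≤ w * (M * L + L + K) := mul_le_mul_of_nonneg_left hML hw0
    have h2 : w * L ≤ 1 * L := mul_le_mul_of_nonneg_right hw1 (by linarith)
    have hK : (0 : ℝ) ≤ K := Nat.cast_nonneg _
    have h3 : w * K ≤ 1 * K := mul_le_mul_of_nonneg_right hw1 hK
    have h4 : (K : ℝ) * 1 ≤ K * L := mul_le_mul_of_nonneg_left hLr hK
    have h5 : -Real.log ε * L ≤ w * M * L := by nlinarith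
    exact le_of_mul_le_mul_right h5 (by linarith)
  calc μ.real {o : ℕ → Fin N | ¬ ∃ m, K ≤ m ∧ ∀ j < ℓ m, x j = o (m + j)}
      ≤ μ.real {o | ∀ i < M, ¬ ∀ j < L, o (K + i * L + j) = x j} := measureReal_mono hsub
    _ = (1 - w) ^ M := measure_no_match P x K L M
    _ ≤ Real.exp (-w) ^ M := pow_le_pow_left₀ (by linarith) (Real.one_sub_le_exp_neg w) M
    _ = Real.exp (-(w * M)) := by
        rw [← Real.exp_nat_mul]
        congr 1
        ring
    _ ≤ Real.exp (Real.log ε) := Real.exp_le_exp.2 (by linarith)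
    _ = ε := Real.exp_log hε

/-! ### Exchange of the two almost sure quantifiers -/

/-- If `0 < α < −Σ λ_i^(s₀) log p_i` and `ν` is the push-forward of the Bernoulli
measure of a probability vector `q` with `Σ q_i log p_i + α > 0`, then
`ν(Λ ∖ R(ō,ℓ)) = 0` for `ℙ_p`-a.e. `ō`. -/
theorem bernoulli_measure_coverSet_compl_zero {N d : ℕ} [NeZero N] (hN : 2 ≤ N)
    (lam p : Fin N → ℝ)
    (hlam : ∀ i, lam i ∈ Set.Ioo (0 : ℝ) 1)
    (hp : ∀ i, 0 < p i) (hpsum : ∑ i, p i = 1)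
    (f : Fin N → EuclideanSpace ℝ (Fin d) → EuclideanSpace ℝ (Fin d))
    (hf : ∀ i x y, dist (f i x) (f i y) = lam i * dist x y)
    (Λ : Set (EuclideanSpace ℝ (Fin d)))
    (hΛne : Λ.Nonempty) (hΛc : IsCompact Λ) (hΛ : Λ = ⋃ i, f i '' Λ)
    (π : (ℕ → Fin N) → EuclideanSpace ℝ (Fin d))
    (hπ : ∀ x, Filter.Tendsto (fun n => prefixMap f x n 0) Filter.atTop (nhds (π x)))
    (μ : Measure (ℕ → Fin N)) [IsProbabilityMeasure μ]
    (hμ : ∀ (m : ℕ) (w : Fin m → Fin N), μ (cylinder w) = ENNReal.ofReal (wordProd p w))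
    (α : ℝ) (hα : 0 < α)
    (ℓ : ℕ → ℕ) (hℓmono : Monotone ℓ)
    (hℓ : Filter.liminf (fun n : ℕ => (ℓ n : ℝ) / Real.log n) Filter.atTop = 1 / α)
    (s0 : ℝ) (hs0 : ∑ i, lam i ^ s0 = 1)
    (hαlt : α < -∑ i, lam i ^ s0 * Real.log (p i))
    (q : Fin N → ℝ) (hq : ∀ i, 0 ≤ q i) (hqsum : ∑ i, q i = 1)
    (hqα : 0 < ∑ i, q i * Real.log (p i) + α)
    (νq : Measure (ℕ → Fin N)) [IsProbabilityMeasure νq]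
    (hνq : ∀ (m : ℕ) (w : Fin m → Fin N), νq (cylinder w) = ENNReal.ofReal (wordProd q w)) :
    ∀ᵐ o ∂μ, νq (π ⁻¹' (Λ \ π '' limsupCylinders ℓ o)) = 0 := by
  obtain ⟨P, hP, hPs, rfl⟩ := exists_eq_infinitePi p (fun i => (hp i).le) hpsum μ hμ
  obtain ⟨Q, hQ, hQs, rfl⟩ := exists_eq_infinitePi q hq hqsum νq hνq
  have hmeas : MeasurableSet {z : (ℕ → Fin N) × (ℕ → Fin N) | z.1 ∈ limsupCylinders ℓ z.2} := by
    have heq : {z : (ℕ → Fin N) × (ℕ → Fin N) | z.1 ∈ limsupCylinders ℓ z.2} =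
        ⋂ k, ⋃ n, ⋃ _ : k ≤ n, ⋂ j, ⋂ _ : j < ℓ n, {z | z.1 j = z.2 (n + j)} := by
      ext z
      simp only [mem_limsupCylinders, mem_iInter, mem_iUnion, mem_ofPred_eq, exists_prop]
    rw [heq]
    refine .iInter fun k => .iUnion fun n => .iUnion fun _ => .iInter fun j => .iInter fun _ => ?_
    exact measurableSet_eq_fun (by fun_prop) (by fun_prop)
  have hae : ∀ᵐ x ∂(Measure.infinitePi (fun _ : ℕ => Q)),
      ∀ᵐ o ∂(Measure.infinitePi (fun _ : ℕ => P)), x ∈ limsupCylinders ℓ o := by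
    filter_upwards [ae_tendsto_log p q hq Q hQs] with x hx
    exact ae_mem_limsupCylinders hp P hPs hα hℓmono hℓ hqα x hx
  rw [Measure.ae_ae_comm hmeas] at hae
  filter_upwards [hae] with o ho
  -- A point of `π⁻¹(Λ \ π(L))` cannot lie in `L`.
  refine measure_mono_null ?_ (ae_iff.1 ho)
  rintro x ⟨-, hx⟩ hxL
  exact hx ⟨x, hxL, rfl⟩
end
end
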